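/- Let p ≥ q > 1 and θ ∈ (0, π/2). If h is a positive convex solution of det(∇²h + hσ) = f·h^{p-1}(h² + |∇h|²)^{(n+1-q)/2} in C_θ with ∇_μ h = cot θ · h on ∂C_θ, where f > 0 is smooth on C_θ, then there exists a constant C depending only on n, p, q, min_{C_θ} f and ‖f‖_{C¹(C_θ)} such that max_{C_θ} |∇ log h| ≤ C. Moreover, if p = q = n + 1, the constant C can be chosen independent of p and q. -/

import Mathlib

/- Formalization of statements from "The L_p dual Minkowski problem for capillary
hypersurfaces".

We work in the ambient space `ℝ^{n+1}`.  The spherical cap `C_θ` is the part of the unit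
sphere centred at `cos θ • e` (where `e = -E_{n+1}`) lying in the closed upper half-space.
Functions on `C_θ` are represented by ambient functions `h : Euc n → ℝ`; the intrinsic
(round-metric) gradient `∇h` and Hessian `∇²h` of the restriction of `h` to `C_θ` are
expressed through ambient derivatives (for tangential arguments these expressions depend
only on the restriction of `h` to the cap).  The quantity `det(∇²h + hσ)` is encoded as the
determinant of the endomorphism of `ℝ^{n+1}` acting as `∇²h + hσ` on the tangent space of
the cap and as the identity on the normal line. -/

open Real Set
open scoped RealInnerProductSpace

noncomputable section

/-- Ambient Euclidean space `ℝ^{n+1}`. -/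
abbrev Euc (n : ℕ) : Type := EuclideanSpace ℝ (Fin (n + 1))

/-- The unit vector `e = -E_{n+1}`. -/
def eVec (n : ℕ) : Euc n := -(EuclideanSpace.single (Fin.last n) (1 : ℝ))

/-- `ν(ξ) = ξ - cos θ • e`, the unit normal (at `ξ`) of the sphere containing the cap `C_θ`. -/
def sphNormal (n : ℕ) (θ : ℝ) (ξ : Euc n) : Euc n := ξ - Real.cos θ • eVec n

/-- The spherical cap `C_θ = {ξ ∈ closure ℝ^{n+1}_+ : |ξ - cos θ • e| = 1}`. -/
def cap (n : ℕ) (θ : ℝ) : Set (Euc n) :=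
  {ξ | 0 ≤ ξ (Fin.last n) ∧ ‖sphNormal n θ ξ‖ = 1}

/-- The boundary `∂C_θ`. -/
def capBdry (n : ℕ) (θ : ℝ) : Set (Euc n) :=
  {ξ | ξ (Fin.last n) = 0 ∧ ‖sphNormal n θ ξ‖ = 1}

/-- The outward unit conormal `μ` of `∂C_θ` in `C_θ` (at boundary points). -/
def conormal (n : ℕ) (θ : ℝ) (ξ : Euc n) : Euc n :=
  Real.cot θ • ξ + Real.sin θ • eVec n

/-- Orthogonal projection of `ℝ^{n+1}` onto the tangent space of the cap at `ξ`. -/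
def tproj (n : ℕ) (θ : ℝ) (ξ : Euc n) : Euc n →L[ℝ] Euc n :=
  ContinuousLinearMap.id ℝ (Euc n) - (innerSL ℝ (sphNormal n θ ξ)).smulRight (sphNormal n θ ξ)

/-- `X` is tangent to the cap at `ξ`. -/
def IsTangent (n : ℕ) (θ : ℝ) (ξ X : Euc n) : Prop :=
  ⟪X, sphNormal n θ ξ⟫ = 0

/-- Intrinsic (round-metric) gradient `∇h` of `h` on the cap. -/
def sgrad (n : ℕ) (θ : ℝ) (h : Euc n → ℝ) (ξ : Euc n) : Euc n :=
  tproj n θ ξ (gradient h ξ)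

/-- Intrinsic (round-metric) Hessian `∇²h(X,Y)` of `h` on the cap (tangential arguments). -/
def shess (n : ℕ) (θ : ℝ) (h : Euc n → ℝ) (ξ X Y : Euc n) : ℝ :=
  ⟪(fderiv ℝ (gradient h) ξ) X, Y⟫ - ⟪gradient h ξ, sphNormal n θ ξ⟫ * ⟪X, Y⟫

/-- Endomorphism representing the intrinsic Hessian `∇²h` on tangent vectors
(and vanishing on the normal line). -/
def thessOp (n : ℕ) (θ : ℝ) (h : Euc n → ℝ) (ξ : Euc n) : Euc n →L[ℝ] Euc n :=
  ((tproj n θ ξ).comp ((fderiv ℝ (gradient h) ξ).comp (tproj n θ ξ)))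
    - ⟪gradient h ξ, sphNormal n θ ξ⟫ • tproj n θ ξ

/-- Rank-one projection onto the normal direction at `ξ`. -/
def normalPart (n : ℕ) (θ : ℝ) (ξ : Euc n) : Euc n →L[ℝ] Euc n :=
  (innerSL ℝ (sphNormal n θ ξ)).smulRight (sphNormal n θ ξ)

/-- Endomorphism acting as `∇²h + hσ` on the tangent space and as the identity on the
normal line. -/
def hessOp (n : ℕ) (θ : ℝ) (h : Euc n → ℝ) (ξ : Euc n) : Euc n →L[ℝ] Euc n :=
  thessOp n θ h ξ + h ξ • tproj n θ ξ + normalPart n θ ξ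

/-- `det(∇²h + hσ)` at `ξ`. -/
def sdet (n : ℕ) (θ : ℝ) (h : Euc n → ℝ) (ξ : Euc n) : ℝ :=
  LinearMap.det (hessOp n θ h ξ).toLinearMap

/-- `h > 0` on the cap. -/
def PosOnCap (n : ℕ) (θ : ℝ) (h : Euc n → ℝ) : Prop := ∀ ξ ∈ cap n θ, 0 < h ξ

/-- Convexity of a solution: `∇²h + hσ > 0` on the cap. -/
def IsConvexSol (n : ℕ) (θ : ℝ) (h : Euc n → ℝ) : Prop :=
  ∀ ξ ∈ cap n θ, ∀ X : Euc n, IsTangent n θ ξ X → X ≠ 0 →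
    0 < shess n θ h ξ X X + h ξ * ⟪X, X⟫

/-- The right-hand side `f·h^{p-1}·(h² + |∇h|²)^{(n+1-q)/2}`. -/
def eqRHS (n : ℕ) (θ p q : ℝ) (f h : Euc n → ℝ) (ξ : Euc n) : ℝ :=
  f ξ * h ξ ^ (p - 1) * (h ξ ^ 2 + ‖sgrad n θ h ξ‖ ^ 2) ^ (((n : ℝ) + 1 - q) / 2)

/-- `h` solves `det(∇²h + hσ) = f·h^{p-1}(h² + |∇h|²)^{(n+1-q)/2}` in `C_θ`. -/
def SolvesEq (n : ℕ) (θ p q : ℝ) (f h : Euc n → ℝ) : Prop :=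
  ∀ ξ ∈ cap n θ, sdet n θ h ξ = eqRHS n θ p q f h ξ

/-- Robin boundary condition `∇_μ h = cot θ · h` on `∂C_θ`. -/
def RobinBC (n : ℕ) (θ : ℝ) (h : Euc n → ℝ) : Prop :=
  ∀ ξ ∈ capBdry n θ, ⟪sgrad n θ h ξ, conormal n θ ξ⟫ = Real.cot θ * h ξ

/-- `l(ξ) = sin²θ + cos θ·⟨ξ, e⟩`. -/
def lFun (n : ℕ) (θ : ℝ) (ξ : Euc n) : ℝ :=
  Real.sin θ ^ 2 + Real.cos θ * ⟪ξ, eVec n⟫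

/-- `‖f‖_{C⁰(C_θ)} ≤ K`. -/
def CZeroNormLe (n : ℕ) (θ : ℝ) (f : Euc n → ℝ) (K : ℝ) : Prop :=
  ∀ ξ ∈ cap n θ, |f ξ| ≤ K

/-- `‖f‖_{C¹(C_θ)} ≤ K`. -/
def COneNormLe (n : ℕ) (θ : ℝ) (f : Euc n → ℝ) (K : ℝ) : Prop :=
  CZeroNormLe n θ f K ∧ ∀ ξ ∈ cap n θ, ‖sgrad n θ f ξ‖ ≤ K

/-- `‖f‖_{C²(C_θ)} ≤ K`. -/
def CTwoNormLe (n : ℕ) (θ : ℝ) (f : Euc n → ℝ) (K : ℝ) : Prop :=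
  COneNormLe n θ f K ∧
    ∀ ξ ∈ cap n θ, ∀ X Y : Euc n, IsTangent n θ ξ X → IsTangent n θ ξ Y →
      |shess n θ f ξ X Y| ≤ K * ‖X‖ * ‖Y‖

/-- The linearized operator `L_h(γ)` of the equation `𝒢(∇²h,h) = 𝒥₁(∇h,h)` at `h`:
the derivative at `ε = 0` of `𝒢 - 𝒥₁` along the variation `h_ε = h·e^{εγ}`
(cf. equation (5.4) of the paper, which is exactly this derivative). -/
def linOp (n : ℕ) (θ p q : ℝ) (f h γ : Euc n → ℝ) (ξ : Euc n) : ℝ :=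
  deriv (fun ε : ℝ =>
    sdet n θ (fun x => h x * Real.exp (ε * γ x)) ξ
      - eqRHS n θ p q f (fun x => h x * Real.exp (ε * γ x)) ξ) 0

/-- Endomorphism acting as `l·∇²u + cos θ·(∇u ⊗ e^T + e^T ⊗ ∇u) + uσ` on the tangent space
and as the identity on the normal line. -/
def capillaryOp (n : ℕ) (θ : ℝ) (u : Euc n → ℝ) (ξ : Euc n) : Euc n →L[ℝ] Euc n :=
  lFun n θ ξ • thessOp n θ u ξ
    + Real.cos θ • ((innerSL ℝ (sgrad n θ u ξ)).smulRight (tproj n θ ξ (eVec n))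
        + (innerSL ℝ (tproj n θ ξ (eVec n))).smulRight (sgrad n θ u ξ))
    + u ξ • tproj n θ ξ + normalPart n θ ξ

/-- Endomorphism acting as `∇²v + ∇v ⊗ ∇v + σ` on the tangent space and as the identity on
the normal line. -/
def logOp (n : ℕ) (θ : ℝ) (v : Euc n → ℝ) (ξ : Euc n) : Euc n →L[ℝ] Euc n :=
  thessOp n θ v ξ + (innerSL ℝ (sgrad n θ v ξ)).smulRight (sgrad n θ v ξ)
    + tproj n θ ξ + normalPart n θ ξ

/-- Geodesic distance on `C_θ` from `ξ` to the top point `N = (0,…,0,1-cos θ)`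
(for `θ ∈ (0,π/2)` the cap is geodesically convex, so this is `arccos ⟨ν(ξ), ν(N)⟩`). -/
def distToTop (n : ℕ) (θ : ℝ) (ξ : Euc n) : ℝ :=
  Real.arccos (ξ (Fin.last n) + Real.cos θ)

/-- The function `d := d_N²/(2θ)`. -/
def dCap (n : ℕ) (θ : ℝ) (ξ : Euc n) : ℝ := distToTop n θ ξ ^ 2 / (2 * θ)

/-!
Extend `v = log h` homogeneously of degree `0` from the centre of the sphere. With
`A = ∇²v + ∇v ⊗ ∇v + σ`, which is positive definite by convexity, the equation becomes
`det A = f e^{(p - q) v} (1 + |∇v|²)^{(n + 1 - q) / 2}`. A multiple `ℓ` of the linear function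
`⟪e, ·⟫` satisfies `∇_μ ℓ = cot θ` on `∂C_θ`, so `w = v - ℓ` satisfies the homogeneous Neumann
condition, and it suffices to bound `|∇w|` at a point where it is maximal.

On `∂C_θ`, differentiating `∇_μ w = 0` along `∇w` gives `∇²w(∇w, μ) = -cot θ |∇w|²`, so `|∇w|`
increases into the cap unless `∇w = 0`. At an interior maximum, `∇²w(∇w, ·) = 0` and the second
derivatives of `|∇w|` bound the third derivatives of `v` in the direction `∇w` by about `-|∇w|² σ`.
Inserting this into the logarithm of the equation, differentiated in the direction `∇w`, yields
`|∇w| τ + (p - q) |∇w| ≤ L`, where `τ` is the trace of `A⁻¹` on the tangent space. This bounds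
`|∇w|` if `p > q`. If `p = q`, set `s = (1 + |∇v|²)^{1/2}`, which is comparable to `|∇w|`; then
`1 ≤ det A · τ^n ≤ max f · s^{n + 1 - q} (L / |∇w|)^n`, which bounds `s^{q - 1}`.
-/

open Filter Topology
open scoped Gradient

section Calculus

variable {E : Type*} [NormedAddCommGroup E] [InnerProductSpace ℝ E] [CompleteSpace E]
  {u v : E → ℝ} {x : E}

/-- The Hessian of `u`, encoded as the derivative of its gradient field. -/
abbrev hess (u : E → ℝ) : E → E →L[ℝ] E := fderiv ℝ (∇ u)

theorem contDiffAt_gradient {m k : WithTop ℕ∞} (hu : ContDiffAt ℝ k u x) (hmk : m + 1 ≤ k) :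
    ContDiffAt ℝ m (∇ u) x :=
  (InnerProductSpace.toDual ℝ E).symm.toContinuousLinearEquiv.contDiff.contDiffAt.comp x
    (hu.fderiv_right hmk)

theorem hasFDerivAt_gradient (hu : ContDiffAt ℝ 2 u x) : HasFDerivAt (∇ u) (hess u x) x :=
  ((contDiffAt_gradient (m := 1) hu (by norm_num)).differentiableAt one_ne_zero).hasFDerivAt

theorem contDiffAt_hess (hu : ContDiffAt ℝ 3 u x) : ContDiffAt ℝ 1 (hess u) x :=
  (contDiffAt_gradient (m := 2) hu (by norm_num)).fderiv_right (by norm_num)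

theorem hasFDerivAt_hess (hu : ContDiffAt ℝ 3 u x) :
    HasFDerivAt (hess u) (fderiv ℝ (hess u) x) x :=
  ((contDiffAt_hess hu).differentiableAt one_ne_zero).hasFDerivAt

theorem inner_hess_comm (hu : ContDiffAt ℝ 2 u x) (Y Z : E) :
    ⟪hess u x Y, Z⟫ = ⟪Y, hess u x Z⟫ := by
  have hess_eq (Y Z : E) : fderiv ℝ (fderiv ℝ u) x Y Z = ⟪hess u x Y, Z⟫ := by
    have toDual_gradient : fderiv ℝ u = fun y => InnerProductSpace.toDual ℝ E (∇ u y) := by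
      funext y; simp [gradient]
    have h : HasFDerivAt (fun y => InnerProductSpace.toDual ℝ E (∇ u y)) _ x :=
      (InnerProductSpace.toDual ℝ E).toContinuousLinearEquiv.hasFDerivAt.comp x
        (hasFDerivAt_gradient hu)
    rw [toDual_gradient, h.fderiv]
    rfl
  rw [← hess_eq, (hu.isSymmSndFDerivAt (by simp)).eq, hess_eq, real_inner_comm]

theorem inner_fderiv_hess_comm (hu : ContDiffAt ℝ 3 u x) (Y Z : E) :
    ⟪fderiv ℝ (hess u) x Y Y, Z⟫ = ⟪fderiv ℝ (hess u) x Z Y, Y⟫ := by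
  have entry (V W : E) : HasFDerivAt (fun y => ⟪hess u y V, W⟫) _ x :=
    ((hasFDerivAt_hess hu).clm_apply (hasFDerivAt_const V x)).inner ℝ (hasFDerivAt_const W x)
  have symm : (fun y => ⟪hess u y Y, Z⟫) =ᶠ[𝓝 x] fun y => ⟪hess u y Z, Y⟫ := by
    filter_upwards [hu.eventually (by simp)] with y hy
    rw [inner_hess_comm (hy.of_le (by norm_num)), real_inner_comm]
  have h := DFunLike.congr_fun (((entry Y Z).congr_of_eventuallyEq symm.symm).unique (entry Z Y)) Y
  have hsymm := ((contDiffAt_gradient (m := 2) hu (by norm_num)).isSymmSndFDerivAt (by simp)).eq Y Z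
  simp only [ContinuousLinearMap.comp_apply, fderivInnerCLM_apply, ContinuousLinearMap.prod_apply,
    add_apply, ContinuousLinearMap.flip_apply, zero_apply,
    inner_zero_right, zero_add, map_zero] at h
  rw [h, hsymm]

theorem hasDerivAt_comp_curve {γ : ℝ → E} {γ' : E} {s : ℝ} (hu : DifferentiableAt ℝ u (γ s))
    (hγ : HasDerivAt γ γ' s) : HasDerivAt (fun s => u (γ s)) ⟪∇ u (γ s), γ'⟫ s := by
  rw [inner_gradient_left]
  exact hu.hasFDerivAt.comp_hasDerivAt s hγ

theorem hasDerivAt_add_smul {E : Type*} [NormedAddCommGroup E] [NormedSpace ℝ E]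
    (x Y : E) (s : ℝ) : HasDerivAt (fun t : ℝ => x + t • Y) Y s := by
  simpa using ((hasDerivAt_id s).smul_const Y).const_add x

theorem hasDerivAt_norm_comp {E : Type*} [NormedAddCommGroup E] [InnerProductSpace ℝ E]
    {γ : ℝ → E} {γ' : E} {s : ℝ} (hγ : HasDerivAt γ γ' s) (h0 : γ s ≠ 0) :
    HasDerivAt (fun t => ‖γ t‖) (⟪γ s, γ'⟫ / ‖γ s‖) s := by
  have h := hγ.norm_sq.sqrt (by simpa using h0)
  simp only [Real.sqrt_sq (norm_nonneg _)] at h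
  exact h.congr_deriv (by field_simp)

theorem nonpos_of_isLocalMax_of_hasDerivAt_of_hasDerivAt {φ φ' : ℝ → ℝ} {φ'' s : ℝ}
    (hmax : IsLocalMax φ s) (hφ : ∀ᶠ t in 𝓝 s, HasDerivAt φ (φ' t) t)
    (hφ' : HasDerivAt φ' φ'' s) : φ'' ≤ 0 := by
  by_contra! hpos
  have deriv_eq : deriv φ =ᶠ[𝓝 s] φ' := hφ.mono fun t ht => ht.deriv
  have deriv2_eq : deriv (deriv φ) s = φ'' := deriv_eq.deriv_eq.trans hφ'.deriv
  have hmin : IsLocalMin φ s := isLocalMin_of_deriv_deriv_pos (deriv2_eq ▸ hpos)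
    hmax.deriv_eq_zero hφ.self_of_nhds.continuousAt
  have hconst : φ =ᶠ[𝓝 s] fun _ => φ s := by
    filter_upwards [hmax, hmin] with t h₁ h₂ using le_antisymm h₁ h₂
  have : deriv (deriv φ) s = 0 := by
    rw [(hconst.deriv.trans (.of_eq (deriv_const' _))).deriv_eq, deriv_const]
  linarith

theorem eventually_nhdsGT_lt_of_hasDerivAt_pos {φ : ℝ → ℝ} {φ' s : ℝ} (hφ : HasDerivAt φ φ' s)
    (hpos : 0 < φ') : ∀ᶠ t in 𝓝[>] s, φ s < φ t := by
  have hslope : ∀ᶠ t in 𝓝[>] s, 0 < slope φ s t :=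
    nhdsGT_le_nhdsNE s ((hasDerivAt_iff_tendsto_slope.1 hφ).eventually (lt_mem_nhds hpos))
  filter_upwards [hslope, self_mem_nhdsWithin] with t ht hst
  rw [slope_def_field] at ht
  exact sub_pos.1 ((div_pos_iff_of_pos_right (sub_pos.2 hst)).1 ht)

theorem gradient_sub (hu : DifferentiableAt ℝ u x) (hv : DifferentiableAt ℝ v x) :
    ∇ (u - v) x = ∇ u x - ∇ v x := by
  simp [gradient, fderiv_sub hu hv]

theorem hess_sub (hu : ContDiffAt ℝ 2 u x) (hv : ContDiffAt ℝ 2 v x) :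
    hess (u - v) x = hess u x - hess v x := by
  have h : ∇ (u - v) =ᶠ[𝓝 x] ∇ u - ∇ v := by
    filter_upwards [hu.eventually (by simp), hv.eventually (by simp)]
      with y huy hvy
    exact gradient_sub (huy.differentiableAt two_ne_zero) (hvy.differentiableAt two_ne_zero)
  rw [hess, h.fderiv_eq]
  exact fderiv_sub (hasFDerivAt_gradient hu).differentiableAt
    (hasFDerivAt_gradient hv).differentiableAt

theorem fderiv_hess_sub (hu : ContDiffAt ℝ 3 u x) (hv : ContDiffAt ℝ 3 v x) :
    fderiv ℝ (hess (u - v)) x = fderiv ℝ (hess u) x - fderiv ℝ (hess v) x := by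
  have h : hess (u - v) =ᶠ[𝓝 x] hess u - hess v := by
    filter_upwards [hu.eventually (by simp), hv.eventually (by simp)]
      with y huy hvy
    exact hess_sub (huy.of_le (by norm_num)) (hvy.of_le (by norm_num))
  rw [h.fderiv_eq]
  exact fderiv_sub (hasFDerivAt_hess hu).differentiableAt (hasFDerivAt_hess hv).differentiableAt

theorem gradient_log (hu : DifferentiableAt ℝ u x) (hx : u x ≠ 0) :
    ∇ (fun y => Real.log (u y)) x = (u x)⁻¹ • ∇ u x := by
  simp [gradient, fderiv.log hu hx]

theorem hess_log (hu : ContDiffAt ℝ 2 u x) (hx : u x ≠ 0) (Y : E) :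
    hess (fun y => Real.log (u y)) x Y =
      (u x)⁻¹ • hess u x Y - ((u x ^ 2)⁻¹ * ⟪∇ u x, Y⟫) • ∇ u x := by
  have h : ∇ (fun y => Real.log (u y)) =ᶠ[𝓝 x] fun y => (u y)⁻¹ • ∇ u y := by
    filter_upwards [hu.eventually (by simp), hu.continuousAt.eventually_ne hx]
      with y huy hy
    exact gradient_log (huy.differentiableAt two_ne_zero) hy
  have hinv : HasFDerivAt (fun y => (u y)⁻¹) _ x :=
    (hasDerivAt_inv hx).comp_hasFDerivAt x (hu.differentiableAt two_ne_zero).hasFDerivAt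
  rw [hess, h.fderiv_eq, (hinv.fun_smul (hasFDerivAt_gradient hu)).fderiv]
  simp [sub_eq_add_neg]

end Calculus

section Sphere

open InnerProductSpace (rankOne)

variable {E : Type*} [NormedAddCommGroup E] [InnerProductSpace ℝ E] {x Y : E}

/-- The orthogonal projection onto the hyperplane `x^⊥`, for a unit vector `x`. -/
def tangentProj (x : E) : E →L[ℝ] E := ContinuousLinearMap.id ℝ E - rankOne ℝ x x

theorem tangentProj_apply (x Y : E) : tangentProj x Y = Y - ⟪x, Y⟫ • x := rfl

theorem tangentProj_of_inner_eq_zero (hY : ⟪x, Y⟫ = 0) : tangentProj x Y = Y := by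
  simp [tangentProj_apply, hY]

theorem inner_tangentProj_left (hx : ‖x‖ = 1) (Y : E) : ⟪tangentProj x Y, x⟫ = 0 := by
  simp [tangentProj_apply, inner_sub_left, inner_smul_left, hx, real_inner_comm]

theorem inner_tangentProj_comm (x Y Z : E) : ⟪tangentProj x Y, Z⟫ = ⟪Y, tangentProj x Z⟫ := by
  simp only [tangentProj_apply, inner_sub_left, inner_sub_right, inner_smul_left,
    inner_smul_right, real_inner_comm x Y, conj_trivial]
  ring

theorem norm_tangentProj_le (hx : ‖x‖ = 1) (Y : E) : ‖tangentProj x Y‖ ≤ ‖Y‖ := by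
  have h : ‖tangentProj x Y‖ ^ 2 = ‖Y‖ ^ 2 - ⟪x, Y⟫ ^ 2 := by
    simp only [tangentProj_apply, norm_sub_sq_real, inner_smul_right, norm_smul,
      Real.norm_eq_abs, mul_pow, sq_abs, hx, real_inner_comm x Y]
    ring
  exact le_of_sq_le_sq (by nlinarith [sq_nonneg ⟪x, Y⟫]) (norm_nonneg Y)

theorem hasFDerivAt_normalize (hx : ‖x‖ = 1) :
    HasFDerivAt NormedSpace.normalize (tangentProj x) x := by
  have hnorm : HasFDerivAt (fun y : E => ‖y‖) (innerSL ℝ x) x := by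
    have h := (hasStrictFDerivAt_norm_sq x).hasFDerivAt.sqrt (by simp [hx])
    simp only [Real.sqrt_sq (norm_nonneg _), hx] at h
    convert h using 1
    ext Y
    simp
  have hinv := (hasDerivAt_inv (by simp [hx])).comp_hasFDerivAt x hnorm
  refine (hinv.smul (hasFDerivAt_id x)).congr_fderiv ?_
  ext Y
  simp [tangentProj_apply, hx, sub_eq_add_neg]

theorem exists_sphere_curve (hx : ‖x‖ = 1) (hY : ⟪x, Y⟫ = 0) :
    ∃ γ : ℝ → E, γ 0 = x ∧ HasDerivAt γ Y 0 ∧ (∀ s, ‖γ s‖ = 1) ∧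
      ∀ s, γ s ∈ Submodule.span ℝ {x, Y} := by
  refine ⟨fun s => NormedSpace.normalize (x + s • Y), ?_, ?_, fun s => ?_, fun s => ?_⟩
  · simpa using NormedSpace.normalize_eq_self_of_norm_eq_one hx
  · have hnormalize : HasFDerivAt NormedSpace.normalize (tangentProj x) (x + (0 : ℝ) • Y) := by
      simpa using hasFDerivAt_normalize hx
    exact (hnormalize.comp_hasDerivAt 0 (hasDerivAt_add_smul x Y 0)).congr_deriv
      (tangentProj_of_inner_eq_zero hY)
  · rw [NormedSpace.norm_normalize_eq_one_iff]
    intro h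
    have := congrArg (fun y => ⟪x, y⟫) h
    simp [inner_add_right, inner_smul_right, hx, hY] at this
  · exact Submodule.smul_mem _ _ (Submodule.mem_span_pair.2 ⟨1, s, by simp⟩)

/-- Positive homogeneity of degree `0`; such functions on `E` correspond to functions on the
unit sphere. -/
def ZeroHomogeneous (u : E → ℝ) : Prop := ∀ r : ℝ, 0 < r → ∀ y, u (r • y) = u y

theorem ZeroHomogeneous.sub {u v : E → ℝ} (hu : ZeroHomogeneous u)
    (hv : ZeroHomogeneous v) : ZeroHomogeneous (u - v) :=
  fun r hr y => by simp [hu r hr, hv r hr]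

/-- The `0`-homogeneous function which on the unit sphere agrees with `u` on the unit sphere
centred at `c`; its ambient derivatives encode the covariant derivatives of `u` on that sphere. -/
def radialExt (c : E) (u : E → ℝ) (y : E) : ℝ := u (c + NormedSpace.normalize y)

theorem zeroHomogeneous_radialExt (c : E) (u : E → ℝ) : ZeroHomogeneous (radialExt c u) :=
  fun r hr y => by rw [radialExt, NormedSpace.normalize_smul_of_pos hr, radialExt]

theorem radialExt_of_norm_eq_one (c : E) (u : E → ℝ) (hx : ‖x‖ = 1) :
    radialExt c u x = u (c + x) := by
  rw [radialExt, NormedSpace.normalize_eq_self_of_norm_eq_one hx]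

theorem contDiffAt_radialExt {c : E} {u : E → ℝ} {k : WithTop ℕ∞} (hx : ‖x‖ = 1)
    (hu : ContDiffAt ℝ k u (c + x)) : ContDiffAt ℝ k (radialExt c u) x := by
  have hx0 : x ≠ 0 := norm_ne_zero_iff.1 (by simp [hx])
  have hnormalize : ContDiffAt ℝ k (fun y : E => c + NormedSpace.normalize y) x :=
    contDiffAt_const.add (((contDiffAt_norm ℝ hx0).inv (by simp [hx])).smul contDiffAt_id)
  refine ContDiffAt.comp x ?_ hnormalize
  rwa [NormedSpace.normalize_eq_self_of_norm_eq_one hx]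

variable [CompleteSpace E] {u : E → ℝ} {c : E}

theorem ZeroHomogeneous.inner_gradient_self (hu : ZeroHomogeneous u)
    (hd : DifferentiableAt ℝ u x) : ⟪∇ u x, x⟫ = 0 := by
  have hray : HasDerivAt (fun s : ℝ => (1 + s) • x) x 0 := by
    simpa using ((hasDerivAt_id (0 : ℝ)).const_add 1).smul_const x
  have hder := hasDerivAt_comp_curve (u := u) (by simpa using hd) hray
  have hconst : (fun s : ℝ => u ((1 + s) • x)) =ᶠ[𝓝 0] fun _ => u x := by
    filter_upwards [Ioi_mem_nhds (show (-1 : ℝ) < 0 by simp)] with s hs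
    exact hu _ (by linarith [mem_Ioi.1 hs]) x
  simpa using hder.unique ((hasDerivAt_const (0 : ℝ) (u x)).congr_of_eventuallyEq hconst)

theorem ZeroHomogeneous.hess_self (hu : ZeroHomogeneous u) (hd : ContDiffAt ℝ 2 u x) :
    hess u x x = -∇ u x := by
  have hinner := (hasFDerivAt_gradient hd).inner ℝ (hasFDerivAt_id x)
  have hzero : (fun y => ⟪∇ u y, id y⟫) =ᶠ[𝓝 x] fun _ => 0 := by
    filter_upwards [hd.eventually (by simp)] with y hy
    exact hu.inner_gradient_self (hy.differentiableAt two_ne_zero)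
  have h := hinner.unique ((hasFDerivAt_const (0 : ℝ) x).congr_of_eventuallyEq hzero)
  refine ext_inner_left ℝ fun Y => ?_
  have hY : ⟪∇ u x, Y⟫ + ⟪hess u x Y, x⟫ = 0 := DFunLike.congr_fun h Y
  rw [← inner_hess_comm hd, inner_neg_right, real_inner_comm (∇ u x)]
  linarith

theorem ZeroHomogeneous.gradient_smul (hu : ZeroHomogeneous u) {r : ℝ} (hr : 0 < r) (y : E) :
    ∇ u (r • y) = r⁻¹ • ∇ u y := by
  have h := fderiv_comp_smul (𝕜 := ℝ) (f := u) (x := y) r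
  rw [show (fun x => u (r • x)) = u from funext (hu r hr)] at h
  simp [gradient, h, hr.ne']

theorem gradient_radialExt (hx : ‖x‖ = 1) (hu : DifferentiableAt ℝ u (c + x)) :
    ∇ (radialExt c u) x = tangentProj x (∇ u (c + x)) := by
  have hnormalize : HasFDerivAt (fun y => c + NormedSpace.normalize y) (tangentProj x) x :=
    (hasFDerivAt_normalize hx).const_add c
  have hcomp : HasFDerivAt (radialExt c u) (fderiv ℝ u (c + x) ∘L tangentProj x) x := by
    refine HasFDerivAt.comp x ?_ hnormalize
    rw [NormedSpace.normalize_eq_self_of_norm_eq_one hx]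
    exact hu.hasFDerivAt
  refine ext_inner_right ℝ fun Y => ?_
  rw [inner_gradient_left, hcomp.fderiv, inner_tangentProj_comm, inner_gradient_left]
  rfl

theorem hess_radialExt_of_inner_eq_zero (hx : ‖x‖ = 1) (hu : ContDiffAt ℝ 2 u (c + x))
    (hY : ⟪x, Y⟫ = 0) :
    hess (radialExt c u) x Y = tangentProj x (hess u (c + x) Y) - ⟪x, ∇ u (c + x)⟫ • Y
      - ⟪Y, ∇ u (c + x)⟫ • x := by
  obtain ⟨γ, rfl, hγ, hγ1, -⟩ := exists_sphere_curve hx hY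
  have hleft := (hasFDerivAt_gradient (contDiffAt_radialExt hx hu)).comp_hasDerivAt 0 hγ
  have hG : HasDerivAt (fun s => ∇ u (c + γ s)) (hess u (c + γ 0) Y) 0 :=
    HasFDerivAt.comp_hasDerivAt 0 (hasFDerivAt_gradient hu) (hγ.const_add c)
  have hright := hG.sub ((hγ.inner ℝ hG).smul hγ)
  have hγt : Tendsto (fun s => c + γ s) (𝓝 0) (𝓝 (c + γ 0)) :=
    (hγ.const_add c).continuousAt
  have hcongr : (∇ (radialExt c u) ∘ γ) =ᶠ[𝓝 0]
      fun s => ∇ u (c + γ s) - ⟪γ s, ∇ u (c + γ s)⟫ • γ s := by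
    filter_upwards [hγt.eventually (hu.eventually (by simp))] with s hs
    exact gradient_radialExt (hγ1 s) (hs.differentiableAt two_ne_zero)
  rw [hleft.unique (hright.congr_of_eventuallyEq hcongr), tangentProj_apply, add_smul]
  abel

theorem hess_radialExt (hx : ‖x‖ = 1) (hu : ContDiffAt ℝ 2 u (c + x)) (Y : E) :
    hess (radialExt c u) x Y =
      tangentProj x (hess u (c + x) (tangentProj x Y)) - ⟪x, ∇ u (c + x)⟫ • tangentProj x Y
        - ⟪∇ u (c + x), tangentProj x Y⟫ • x - ⟪x, Y⟫ • tangentProj x (∇ u (c + x)) := by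
  have hY : ⟪x, tangentProj x Y⟫ = 0 := by rw [real_inner_comm, inner_tangentProj_left hx]
  calc hess (radialExt c u) x Y
      = hess (radialExt c u) x (tangentProj x Y) + ⟪x, Y⟫ • hess (radialExt c u) x x := by
        rw [← map_smul, ← map_add, tangentProj_apply, sub_add_cancel]
    _ = _ := by
        rw [hess_radialExt_of_inner_eq_zero hx hu hY,
          (zeroHomogeneous_radialExt c u).hess_self (contDiffAt_radialExt hx hu),
          gradient_radialExt hx (hu.differentiableAt two_ne_zero), smul_neg, ← sub_eq_add_neg,
          real_inner_comm (tangentProj x Y)]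

end Sphere

section LinearFunctions

variable {E : Type*} [NormedAddCommGroup E] [InnerProductSpace ℝ E] [CompleteSpace E]
  {x Z : E}

theorem gradient_innerSL (b x : E) : ∇ (innerSL ℝ b) x = b := by
  refine ext_inner_right ℝ fun Y => ?_
  rw [inner_gradient_left, (innerSL ℝ b).fderiv, innerSL_apply_apply]

theorem gradient_radialExt_innerSL (c b : E) (hx : ‖x‖ = 1) :
    ∇ (radialExt c (innerSL ℝ b)) x = tangentProj x b := by
  rw [gradient_radialExt hx (((innerSL ℝ b).contDiff).differentiable one_ne_zero _),
    gradient_innerSL]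

theorem hess_radialExt_innerSL (c b : E) (hx : ‖x‖ = 1) (Y : E) :
    hess (radialExt c (innerSL ℝ b)) x Y =
      -⟪x, b⟫ • tangentProj x Y - ⟪b, tangentProj x Y⟫ • x - ⟪x, Y⟫ • tangentProj x b := by
  have hhess : hess (innerSL ℝ b) (c + x) = 0 := by
    rw [hess, funext (gradient_innerSL b), fderiv_const_apply]
  rw [hess_radialExt hx ((innerSL ℝ b).contDiff).contDiffAt, hhess, gradient_innerSL]
  simp

theorem inner_fderiv_hess_radialExt_innerSL (c b : E) (hx : ‖x‖ = 1) (hZ : ⟪x, Z⟫ = 0) (Y : E) :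
    ⟪fderiv ℝ (hess (radialExt c (innerSL ℝ b))) x Z Y, Y⟫ =
      -⟪Z, b⟫ * ⟪Y, Y⟫ + 3 * ⟪Z, b⟫ * ⟪x, Y⟫ ^ 2 + 6 * ⟪x, b⟫ * ⟪x, Y⟫ * ⟪Z, Y⟫
        - 2 * ⟪b, Y⟫ * ⟪Z, Y⟫ := by
  set ψ := radialExt c (innerSL ℝ b)
  obtain ⟨γ, rfl, hγ, hγ1, -⟩ := exists_sphere_curve hx hZ
  have hψ : ContDiffAt ℝ 3 ψ (γ 0) := contDiffAt_radialExt hx ((innerSL ℝ b).contDiff).contDiffAt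
  have hleft : HasDerivAt (fun s => ⟪hess ψ (γ s) Y, Y⟫) _ 0 :=
    (((hasFDerivAt_hess hψ).comp_hasDerivAt 0 hγ).clm_apply (hasDerivAt_const 0 Y)).inner ℝ
      (hasDerivAt_const 0 Y)
  have hγb : HasDerivAt (fun s => ⟪γ s, b⟫) ⟪Z, b⟫ 0 := by
    simpa using hγ.inner ℝ (hasDerivAt_const 0 b)
  have hγY : HasDerivAt (fun s => ⟪γ s, Y⟫) ⟪Z, Y⟫ 0 := by
    simpa using hγ.inner ℝ (hasDerivAt_const 0 Y)
  have hright := ((hγb.const_mul (-⟪Y, Y⟫)).fun_add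
    ((hγb.const_mul 3).fun_mul (hγY.fun_pow 2))).fun_sub (hγY.const_mul (2 * ⟪b, Y⟫))
  have hcongr : (fun s => ⟪hess ψ (γ s) Y, Y⟫) = fun s =>
      -⟪Y, Y⟫ * ⟪γ s, b⟫ + 3 * ⟪γ s, b⟫ * ⟪γ s, Y⟫ ^ 2 - 2 * ⟪b, Y⟫ * ⟪γ s, Y⟫ := by
    funext s
    rw [hess_radialExt_innerSL c b (hγ1 s)]
    simp only [tangentProj_apply, inner_sub_left, inner_sub_right, inner_smul_left,
      inner_smul_right, conj_trivial, real_inner_comm (γ s) b]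
    ring
  rw [hcongr] at hleft
  have h := hleft.unique hright
  simp only [inner_zero_right, map_zero, add_zero, zero_add] at h
  rw [h]
  ring

theorem abs_inner_fderiv_hess_radialExt_innerSL_le (c b : E) (hx : ‖x‖ = 1) (hZ : ⟪x, Z⟫ = 0)
    (Y : E) :
    |⟪fderiv ℝ (hess (radialExt c (innerSL ℝ b))) x Z Y, Y⟫| ≤ 12 * ‖b‖ * ‖Z‖ * ‖Y‖ ^ 2 := by
  have hxY : |⟪x, Y⟫| ≤ ‖Y‖ := by simpa [hx] using abs_real_inner_le_norm x Y
  have hxb : |⟪x, b⟫| ≤ ‖b‖ := by simpa [hx] using abs_real_inner_le_norm x b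
  have hZb : |⟪Z, b⟫| ≤ ‖Z‖ * ‖b‖ := abs_real_inner_le_norm Z b
  have hZY : |⟪Z, Y⟫| ≤ ‖Z‖ * ‖Y‖ := abs_real_inner_le_norm Z Y
  have hbY : |⟪b, Y⟫| ≤ ‖b‖ * ‖Y‖ := abs_real_inner_le_norm b Y
  rw [inner_fderiv_hess_radialExt_innerSL c b hx hZ, real_inner_self_eq_norm_sq]
  calc _ ≤ |⟪Z, b⟫| * ‖Y‖ ^ 2 + 3 * |⟪Z, b⟫| * |⟪x, Y⟫| ^ 2 + 6 * |⟪x, b⟫| * |⟪x, Y⟫| * |⟪Z, Y⟫|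
        + 2 * |⟪b, Y⟫| * |⟪Z, Y⟫| := by
        refine (abs_sub _ _).trans (add_le_add ((abs_add_three _ _ _).trans ?_) ?_) <;>
          simp [abs_mul]
    _ ≤ (‖Z‖ * ‖b‖) * ‖Y‖ ^ 2 + 3 * (‖Z‖ * ‖b‖) * ‖Y‖ ^ 2 + 6 * ‖b‖ * ‖Y‖ * (‖Z‖ * ‖Y‖)
        + 2 * (‖b‖ * ‖Y‖) * (‖Z‖ * ‖Y‖) := by gcongr
    _ = 12 * ‖b‖ * ‖Z‖ * ‖Y‖ ^ 2 := by ring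

end LinearFunctions

section Determinants

theorem hasDerivAt_matrix_det_of_eq_one {ι : Type*} [Fintype ι] [DecidableEq ι]
    {M : ℝ → Matrix ι ι ℝ} {M' : Matrix ι ι ℝ} {s : ℝ}
    (hM : ∀ i j, HasDerivAt (fun t => M t i j) (M' i j) s) (hs : M s = 1) :
    HasDerivAt (fun t => (M t).det) M'.trace s := by
  let detRows : ContinuousMultilinearMap ℝ (fun _ : ι => ι → ℝ) ℝ :=
    { Matrix.detRowAlternating.toMultilinearMap with
      cont := Continuous.matrix_det continuous_id }
  have hrows (i : ι) : HasFDerivAt (fun t => M t i) (.toSpanSingleton ℝ (M' i)) s :=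
    (hasDerivAt_pi.2 (hM i)).hasFDerivAt
  have h : HasDerivAt (fun t => (M t).det) _ s :=
    (HasFDerivAt.multilinear_comp (f := detRows) hrows).hasDerivAt
  refine h.congr_deriv ?_
  have update_one (i : ι) : (Matrix.updateRow 1 i (M' i)).det = M' i i := by
    rw [← Matrix.det_transpose, ← Matrix.updateCol_transpose, Matrix.transpose_one,
      ← Matrix.cramer_apply, Matrix.cramer_one]
    rfl
  simp only [sum_apply, ContinuousLinearMap.comp_apply,
    ContinuousLinearMap.toSpanSingleton_apply, one_smul, Matrix.trace, Matrix.diag_apply]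
  refine Finset.sum_congr rfl fun i _ => ?_
  rw [← update_one i, ← hs]
  rfl

theorem det_comp {E : Type*} [NormedAddCommGroup E] [NormedSpace ℝ E] (S T : E →L[ℝ] E) :
    (S ∘L T).det = S.det * T.det :=
  LinearMap.det_comp S.toLinearMap T.toLinearMap

theorem hasDerivAt_det {E : Type*} [NormedAddCommGroup E] [NormedSpace ℝ E]
    [FiniteDimensional ℝ E] {A : ℝ → E →L[ℝ] E} {A' B : E →L[ℝ] E} {s : ℝ}
    (hA : HasDerivAt A A' s) (hB : B ∘L A s = .id ℝ E) :
    HasDerivAt (fun t => (A t).det) ((A s).det * LinearMap.trace ℝ E (B ∘L A')) s := by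
  let b := Module.finBasis ℝ E
  have det_eq (T : E →L[ℝ] E) : (A s).det * (LinearMap.toMatrix b b (B ∘L T)).det = T.det := by
    have hdet : B.det * (A s).det = 1 := by
      rw [← det_comp, hB]
      exact LinearMap.det_id
    calc (A s).det * (LinearMap.toMatrix b b (B ∘L T)).det
        = (A s).det * (B ∘L T).det := by rw [LinearMap.det_toMatrix, ContinuousLinearMap.det]
      _ = (A s).det * (B.det * T.det) := by rw [det_comp]
      _ = T.det := by rw [← mul_assoc, mul_comm (A s).det, hdet, one_mul]
  have entries (i j) : HasDerivAt (fun t => LinearMap.toMatrix b b (B ∘L A t) i j)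
      (LinearMap.toMatrix b b (B ∘L A') i j) s := by
    have h := ((b.coord i).toContinuousLinearMap ∘L B).hasFDerivAt.comp_hasDerivAt s
      (hA.clm_apply (hasDerivAt_const s (b j)))
    simpa [LinearMap.toMatrix_apply, Function.comp_def] using h
  have h := (hasDerivAt_matrix_det_of_eq_one entries (by simp [hB])).const_mul (A s).det
  simpa only [det_eq, ← LinearMap.trace_eq_matrix_trace ℝ b] using h

variable {E : Type*} [NormedAddCommGroup E] [InnerProductSpace ℝ E] [FiniteDimensional ℝ E]
  {A B T T' : E →L[ℝ] E} {x : E}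

open InnerProductSpace (rankOne)

theorem trace_comp_le_trace_comp (hB : B.IsPositive) (h : ∀ Y, ⟪T Y, Y⟫ ≤ ⟪T' Y, Y⟫) :
    LinearMap.trace ℝ E (B ∘L T) ≤ LinearMap.trace ℝ E (B ∘L T') := by
  let b := hB.isSymmetric.eigenvectorBasis rfl
  let eig := hB.isSymmetric.eigenvalues rfl
  have trace_eq (S : E →L[ℝ] E) :
      LinearMap.trace ℝ E (B ∘L S) = ∑ i, eig i * ⟪S (b i), b i⟫ := by
    rw [LinearMap.trace_eq_sum_inner _ b]
    refine Finset.sum_congr rfl fun i _ => ?_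
    have hBb : B (b i) = eig i • b i := hB.isSymmetric.apply_eigenvectorBasis rfl i
    have : ⟪b i, B (S (b i))⟫ = ⟪B (b i), S (b i)⟫ := (hB.isSymmetric (b i) (S (b i))).symm
    simp [this, hBb, inner_smul_right, real_inner_comm (S (b i))]
  rw [trace_eq, trace_eq]
  gcongr with i
  · exact hB.toLinearMap.nonneg_eigenvalues rfl i
  · exact h (b i)

theorem trace_comp_rankOne (B : E →L[ℝ] E) (a c : E) :
    LinearMap.trace ℝ E (B ∘L rankOne ℝ a c) = ⟪c, B a⟫ := by
  rw [InnerProductSpace.comp_rankOne, InnerProductSpace.trace_rankOne]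

theorem exists_isPositive_comp_eq_id (hsymm : ∀ Y Z, ⟪A Y, Z⟫ = ⟪Y, A Z⟫)
    (hpos : ∀ Y, Y ≠ 0 → 0 < ⟪A Y, Y⟫) :
    ∃ B : E →L[ℝ] E, B.IsPositive ∧ B ∘L A = .id ℝ E := by
  have hinj : Function.Injective A.toLinearMap := by
    refine (injective_iff_map_eq_zero A.toLinearMap).2 fun Y hY => ?_
    by_contra hne
    exact (hpos Y hne).ne' (by rw [show A Y = 0 from hY, inner_zero_left])
  let e := LinearEquiv.ofInjectiveEndo A.toLinearMap hinj
  have he : e.toLinearMap.IsPositive := by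
    refine ⟨hsymm, fun Y => ?_⟩
    rcases eq_or_ne Y 0 with rfl | hY
    · simp
    · exact (hpos Y hY).le
  refine ⟨e.symm.toLinearMap.toContinuousLinearMap,
    LinearMap.isPositive_toContinuousLinearMap_iff _ |>.2 he.toLinearMap_symm, ?_⟩
  ext Y
  exact e.symm_apply_apply Y

theorem one_le_trace_and_det_le_trace_sub_one_pow {n : ℕ} (hn : Module.finrank ℝ E = n + 1)
    (hB : B.IsPositive) (hx : x ≠ 0) (hBx : B x = x) :
    1 ≤ LinearMap.trace ℝ E B ∧ B.det ≤ (LinearMap.trace ℝ E B - 1) ^ n := by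
  let eig := hB.isSymmetric.eigenvalues hn
  have eig_nonneg (i) : 0 ≤ eig i := hB.toLinearMap.nonneg_eigenvalues hn i
  obtain ⟨j, hj⟩ : ∃ j, eig j = 1 := by
    refine hB.isSymmetric.exists_eigenvalues_eq hn (Module.End.hasEigenvalue_of_hasEigenvector
      (x := x) ⟨Module.End.mem_eigenspace_iff.2 ?_, hx⟩)
    simpa using hBx
  have htrace : LinearMap.trace ℝ E B = 1 + ∑ i ∈ Finset.univ.erase j, eig i := by
    rw [hB.isSymmetric.trace_eq_sum_eigenvalues hn, ← hj]
    exact (Finset.add_sum_erase _ eig (Finset.mem_univ j)).symm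
  have hdet : B.det = ∏ i ∈ Finset.univ.erase j, eig i := by
    rw [ContinuousLinearMap.det, hB.isSymmetric.det_eq_prod_eigenvalues hn]
    exact (Finset.mul_prod_erase _ eig (Finset.mem_univ j)).symm.trans (by rw [hj, one_mul])
  refine ⟨by linarith [Finset.sum_nonneg fun i (_ : i ∈ Finset.univ.erase j) => eig_nonneg i], ?_⟩
  calc B.det = ∏ i ∈ Finset.univ.erase j, eig i := hdet
    _ ≤ ∏ _i ∈ Finset.univ.erase j, ∑ i ∈ Finset.univ.erase j, eig i :=
        Finset.prod_le_prod (fun i _ => eig_nonneg i)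
          fun i hi => Finset.single_le_sum (fun i _ => eig_nonneg i) hi
    _ = (LinearMap.trace ℝ E B - 1) ^ n := by simp [htrace]

theorem det_smul_id_add_smul_rankOne {n : ℕ} (hn : Module.finrank ℝ E = n + 1) (hx : ‖x‖ = 1)
    {t : ℝ} (ht : t ≠ 0) : (t • .id ℝ E + (1 - t) • rankOne ℝ x x : E →L[ℝ] E).det = t ^ n := by
  have htransvection : (t • .id ℝ E + (1 - t) • rankOne ℝ x x : E →L[ℝ] E).toLinearMap =
      t • LinearMap.transvection (((1 - t) / t) • (innerSL ℝ x).toLinearMap) x := by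
    ext Y
    simp only [ContinuousLinearMap.toLinearMap_add, ContinuousLinearMap.toLinearMap_smul,
      ContinuousLinearMap.coe_id, LinearMap.add_apply, LinearMap.smul_apply, LinearMap.id_coe,
      id_eq, ContinuousLinearMap.coe_coe, InnerProductSpace.rankOne_apply, smul_smul,
      ContinuousLinearMap.toLinearMap_innerSL_apply, LinearMap.transvection.apply,
      innerₛₗ_apply_apply, smul_eq_mul, smul_add, add_right_inj]
    field_simp
  rw [ContinuousLinearMap.det, htransvection, LinearMap.det_smul, LinearMap.transvection.det, hn]
  simp only [ContinuousLinearMap.toLinearMap_innerSL_apply, LinearMap.smul_apply,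
    innerₛₗ_apply_apply, real_inner_self_eq_norm_sq, hx, one_pow, smul_eq_mul, mul_one]
  field_simp
  ring

end Determinants

section LogHessian

open InnerProductSpace (rankOne)

variable {E : Type*} [NormedAddCommGroup E] [InnerProductSpace ℝ E]

theorem hasDerivAt_rankOne_self {γ : ℝ → E} {γ' : E} {s : ℝ} (hγ : HasDerivAt γ γ' s) :
    HasDerivAt (fun t => rankOne ℝ (γ t) (γ t)) (rankOne ℝ γ' (γ s) + rankOne ℝ (γ s) γ') s := by
  have hbilin : IsBoundedBilinearMap ℝ (fun y : E × E => rankOne ℝ y.1 y.2) :=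
    { add_left := fun a b c => by simp
      smul_left := fun r a b => by simp
      add_right := fun a b c => by simp
      smul_right := fun r a b => by simp
      bound := ⟨1, one_pos, fun a b => by simp⟩ }
  have h := (hbilin.hasFDerivAt (γ s, γ s)).comp_hasDerivAt s (hγ.prodMk hγ)
  rw [add_comm]
  exact h

variable [CompleteSpace E] {F v : E → ℝ} {x Z : E}

/-- `∇²v + ∇v ⊗ ∇v + σ` at `x` for a `0`-homogeneous `v` on the unit sphere, acting as the identity
on the normal line. The radial part of the ambient Hessian, `-(x ⊗ ∇v + ∇v ⊗ x)`, is cancelled by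
using `x + ∇v` in the rank-one term. -/
def logHess (v : E → ℝ) (x : E) : E →L[ℝ] E :=
  hess v x + rankOne ℝ (x + ∇ v x) (x + ∇ v x) + .id ℝ E - rankOne ℝ x x

/-- The derivative of `logHess v` at `x` in the direction `Z`. -/
def logHessDeriv (v : E → ℝ) (x Z : E) : E →L[ℝ] E :=
  fderiv ℝ (hess v) x Z
    + (rankOne ℝ (Z + hess v x Z) (x + ∇ v x) + rankOne ℝ (x + ∇ v x) (Z + hess v x Z))
    - (rankOne ℝ Z x + rankOne ℝ x Z)

theorem hasDerivAt_logHess_comp_curve {γ : ℝ → E} {s : ℝ} (hv : ContDiffAt ℝ 3 v (γ s))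
    (hγ : HasDerivAt γ Z s) :
    HasDerivAt (fun t => logHess v (γ t)) (logHessDeriv v (γ s) Z) s := by
  have hgrad : HasDerivAt (fun t => ∇ v (γ t)) (hess v (γ s) Z) s :=
    (hasFDerivAt_gradient (hv.of_le (by norm_num))).comp_hasDerivAt s hγ
  have hhess : HasDerivAt (fun t => hess v (γ t)) (fderiv ℝ (hess v) (γ s) Z) s :=
    (hasFDerivAt_hess hv).comp_hasDerivAt s hγ
  exact ((hhess.add (hasDerivAt_rankOne_self (hγ.add hgrad))).add_const _).sub
    (hasDerivAt_rankOne_self hγ)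

theorem inner_logHess_comm (hv : ContDiffAt ℝ 2 v x) (Y Z : E) :
    ⟪logHess v x Y, Z⟫ = ⟪Y, logHess v x Z⟫ := by
  simp only [logHess, sub_apply, add_apply, InnerProductSpace.rankOne_apply,
    ContinuousLinearMap.id_apply, inner_add_left, inner_sub_left, inner_add_right, inner_sub_right,
    inner_smul_left, inner_smul_right, inner_hess_comm hv, conj_trivial, real_inner_comm Y]
  ring

theorem ZeroHomogeneous.logHess_self (hv : ZeroHomogeneous v) (hd : ContDiffAt ℝ 2 v x)
    (hx : ‖x‖ = 1) : logHess v x x = x := by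
  have hvx := hv.inner_gradient_self (hd.differentiableAt two_ne_zero)
  simp only [logHess, sub_apply, add_apply, InnerProductSpace.rankOne_apply,
    ContinuousLinearMap.id_apply, hv.hess_self hd, inner_add_left, hvx,
    real_inner_self_eq_norm_sq, hx]
  module

theorem inner_logHess_self (hv : ZeroHomogeneous v) (hd : ContDiffAt ℝ 2 v x) (hx : ‖x‖ = 1)
    (Y : E) :
    ⟪logHess v x Y, Y⟫ = ⟪logHess v x (tangentProj x Y), tangentProj x Y⟫ + ⟪x, Y⟫ ^ 2 := by
  have hsplit : Y = tangentProj x Y + ⟪x, Y⟫ • x := by simp [tangentProj_apply]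
  have hYx := inner_tangentProj_left hx Y
  conv_lhs => rw [hsplit]
  rw [map_add, map_smul, hv.logHess_self hd hx]
  simp only [inner_add_left, inner_add_right, inner_smul_left, inner_smul_right, conj_trivial,
    inner_logHess_comm hd _ x, hv.logHess_self hd hx, hYx, real_inner_comm _ x,
    real_inner_self_eq_norm_sq, hx]
  ring

theorem inner_logHessDeriv_self (v : E → ℝ) (x Z Y : E) :
    ⟪logHessDeriv v x Z Y, Y⟫ = ⟪fderiv ℝ (hess v) x Z Y, Y⟫
      + 2 * ⟪Z + hess v x Z, Y⟫ * ⟪x + ∇ v x, Y⟫ - 2 * ⟪Z, Y⟫ * ⟪x, Y⟫ := by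
  simp only [logHessDeriv, sub_apply, add_apply, InnerProductSpace.rankOne_apply,
    inner_add_left, inner_sub_left, inner_smul_left, conj_trivial]
  ring

theorem inner_mul_inner_inverse_logHess_le {B : E →L[ℝ] E} {φ : ℝ} (hB : B.IsPositive)
    (hBA : B ∘L logHess v x = .id ℝ E) (hφ : -1 ≤ φ) (hZ : ⟪x, Z⟫ = 0)
    (hhess : hess v x Z = φ • Z - ⟪∇ v x, Z⟫ • x) :
    ⟪∇ v x, Z⟫ * ⟪B Z, ∇ v x⟫ ≤ ‖Z‖ ^ 2 := by
  have hAZ : logHess v x Z = (1 + φ) • Z + ⟪∇ v x, Z⟫ • ∇ v x := by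
    simp only [logHess, sub_apply, add_apply, InnerProductSpace.rankOne_apply,
      ContinuousLinearMap.id_apply, hhess, inner_add_left, hZ]
    module
  have hBAZ : B (logHess v x Z) = Z := DFunLike.congr_fun hBA Z
  have hBsymm (Y : E) : ⟪B Y, Z⟫ = ⟪B Z, Y⟫ := by
    rw [hB.isSymmetric.apply_clm, real_inner_comm]
  have h : (1 + φ) * ⟪B Z, Z⟫ + ⟪∇ v x, Z⟫ * ⟪B Z, ∇ v x⟫ = ‖Z‖ ^ 2 := by
    calc _ = ⟪B (logHess v x Z), Z⟫ := by
          rw [hBsymm (logHess v x Z), hAZ, inner_add_right, inner_smul_right, inner_smul_right]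
      _ = ‖Z‖ ^ 2 := by rw [hBAZ, real_inner_self_eq_norm_sq]
  have : 0 ≤ ⟪B Z, Z⟫ := hB.inner_nonneg_left Z
  nlinarith

variable [FiniteDimensional ℝ E] {B : E →L[ℝ] E}

theorem trace_comp_logHessDeriv {r e : ℝ} (hx : ‖x‖ = 1) (hv : ContDiffAt ℝ 3 v x)
    (hF : DifferentiableAt ℝ F x) (hFx : F x ≠ 0) (hB : B ∘L logHess v x = .id ℝ E)
    (hdet : ∀ᶠ y in 𝓝 x, ‖y‖ = 1 →
      (logHess v y).det = F y * Real.exp (r * v y) * (1 + ‖∇ v y‖ ^ 2) ^ e)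
    (hZ : ⟪x, Z⟫ = 0) :
    LinearMap.trace ℝ E (B ∘L logHessDeriv v x Z) =
      ⟪∇ F x, Z⟫ / F x + r * ⟪∇ v x, Z⟫ + 2 * e * ⟪∇ v x, hess v x Z⟫ / (1 + ‖∇ v x‖ ^ 2) := by
  obtain ⟨γ, rfl, hγ, hγ1, -⟩ := exists_sphere_curve hx hZ
  set S := 1 + ‖∇ v (γ 0)‖ ^ 2 with hS
  have hSpos : 0 < S := by positivity
  have hgrad : HasDerivAt (fun s => 1 + ‖∇ v (γ s)‖ ^ 2) (2 * ⟪∇ v (γ 0), hess v (γ 0) Z⟫) 0 :=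
    ((hasFDerivAt_gradient (hv.of_le (by norm_num))).comp_hasDerivAt 0 hγ).norm_sq.const_add 1
  have hrhs := ((hasDerivAt_comp_curve hF hγ).fun_mul
    ((hasDerivAt_comp_curve (hv.differentiableAt three_ne_zero) hγ).const_mul r).exp).fun_mul
      (hgrad.rpow_const (p := e) (.inl hSpos.ne'))
  have heq : (fun s => (logHess v (γ s)).det) =ᶠ[𝓝 0]
      fun s => F (γ s) * Real.exp (r * v (γ s)) * (1 + ‖∇ v (γ s)‖ ^ 2) ^ e :=
    (hγ.continuousAt.eventually hdet).mono fun s hs => hs (hγ1 s)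
  have h := (hasDerivAt_det (hasDerivAt_logHess_comp_curve hv hγ) hB).unique
    (hrhs.congr_of_eventuallyEq heq)
  simp only [heq.self_of_nhds, ← hS, Real.rpow_sub_one hSpos.ne'] at h
  have hne : F (γ 0) * Real.exp (r * v (γ 0)) * S ^ e ≠ 0 := by positivity
  refine mul_left_cancel₀ hne (h.trans ?_)
  field_simp

theorem trace_comp_logHessDeriv_le {α β φ : ℝ} (hB : B.IsPositive) (hBx : B x = x) (hx : ‖x‖ = 1)
    (hv : ⟪∇ v x, x⟫ = 0) (hZ : ⟪x, Z⟫ = 0)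
    (hhess : hess v x Z = φ • Z - ⟪∇ v x, Z⟫ • x)
    (hthird : ∀ Y, ⟪fderiv ℝ (hess v) x Z Y, Y⟫ ≤ α * ‖Y‖ ^ 2 + β * ⟪x, Y⟫ ^ 2) :
    LinearMap.trace ℝ E (B ∘L logHessDeriv v x Z) ≤
      α * LinearMap.trace ℝ E B + β + 2 * (1 + φ) * ⟪B Z, ∇ v x⟫ - 2 * ⟪∇ v x, Z⟫ := by
  set κ := ⟪∇ v x, Z⟫
  let T : E →L[ℝ] E := α • .id ℝ E + β • rankOne ℝ x x + (2 * (1 + φ)) • rankOne ℝ Z (∇ v x)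
    + (2 * φ) • rankOne ℝ Z x - (2 * κ) • rankOne ℝ x (x + ∇ v x)
  have hle (Y : E) : ⟪logHessDeriv v x Z Y, Y⟫ ≤ ⟪T Y, Y⟫ := by
    rw [inner_logHessDeriv_self, hhess]
    simp only [T, sub_apply, add_apply, smul_apply, InnerProductSpace.rankOne_apply,
      ContinuousLinearMap.id_apply, inner_add_left, inner_sub_left, inner_smul_left, conj_trivial,
      real_inner_self_eq_norm_sq]
    linarith [hthird Y]
  have hBT : LinearMap.trace ℝ E (B ∘L T) = α * LinearMap.trace ℝ E B + β * ⟪x, B x⟫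
      + 2 * (1 + φ) * ⟪∇ v x, B Z⟫ + 2 * φ * ⟪x, B Z⟫ - 2 * κ * ⟪x + ∇ v x, B x⟫ := by
    simp only [T, ContinuousLinearMap.comp_add, ContinuousLinearMap.comp_sub,
      ContinuousLinearMap.comp_smul, ContinuousLinearMap.comp_id, ← trace_comp_rankOne]
    simp [mul_add]
  have hBZ : ⟪x, B Z⟫ = 0 := by rw [← hZ, ← hB.isSymmetric.apply_clm x Z, hBx]
  calc _ ≤ LinearMap.trace ℝ E (B ∘L T) := trace_comp_le_trace_comp hB hle
    _ = _ := by
      rw [hBT, hBx, hBZ, inner_add_left, hv, real_inner_self_eq_norm_sq, hx,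
        real_inner_comm (∇ v x)]
      ring

end LogHessian

section GradientMaximum

variable {E : Type*} [NormedAddCommGroup E] [InnerProductSpace ℝ E] [CompleteSpace E]
  {w : E → ℝ} {x : E}

-- By Cauchy-Schwarz, testing `∇ w` against its value at `x` linearizes the maximum condition.
theorem isLocalMax_norm_mul_inner_gradient (hmax : IsLocalMax (fun y => ‖y‖ * ‖∇ w y‖) x) :
    IsLocalMax (fun y => ‖y‖ * ⟪∇ w x, ∇ w y⟫) x := by
  filter_upwards [hmax] with y hy
  calc ‖y‖ * ⟪∇ w x, ∇ w y⟫ ≤ ‖y‖ * (‖∇ w x‖ * ‖∇ w y‖) := by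
        gcongr
        exact real_inner_le_norm _ _
    _ = ‖∇ w x‖ * (‖y‖ * ‖∇ w y‖) := by ring
    _ ≤ ‖∇ w x‖ * (‖x‖ * ‖∇ w x‖) := by gcongr
    _ = ‖x‖ * ⟪∇ w x, ∇ w x⟫ := by rw [real_inner_self_eq_norm_sq]; ring

theorem isLocalMax_norm_mul_inner_gradient_line
    (hmax : IsLocalMax (fun y => ‖y‖ * ‖∇ w y‖) x) (Y : E) :
    IsLocalMax (fun s : ℝ => ‖x + s • Y‖ * ⟪∇ w x, ∇ w (x + s • Y)⟫) 0 := by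
  have hline : Tendsto (fun s : ℝ => x + s • Y) (𝓝 0) (𝓝 x) := by
    simpa using (hasDerivAt_add_smul x Y 0).continuousAt.tendsto
  filter_upwards [hline.eventually (isLocalMax_norm_mul_inner_gradient hmax)] with s hs
  simpa using hs

theorem hasDerivAt_norm_mul_inner_gradient {Y : E} {s : ℝ} (hw : ContDiffAt ℝ 2 w (x + s • Y))
    (h0 : x + s • Y ≠ 0) (Z : E) :
    HasDerivAt (fun t => ‖x + t • Y‖ * ⟪Z, ∇ w (x + t • Y)⟫)
      (⟪x + s • Y, Y⟫ / ‖x + s • Y‖ * ⟪Z, ∇ w (x + s • Y)⟫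
        + ‖x + s • Y‖ * ⟪Z, hess w (x + s • Y) Y⟫) s := by
  have hgrad : HasDerivAt (fun t => ⟪Z, ∇ w (x + t • Y)⟫) ⟪Z, hess w (x + s • Y) Y⟫ s := by
    simpa using (hasDerivAt_const s Z).inner ℝ
      ((hasFDerivAt_gradient hw).comp_hasDerivAt s (hasDerivAt_add_smul x Y s))
  exact (hasDerivAt_norm_comp (hasDerivAt_add_smul x Y s) h0).mul hgrad

theorem hasDerivAt_deriv_norm_mul_inner_gradient (hx : ‖x‖ = 1) (hw : ContDiffAt ℝ 3 w x)
    (Y Z : E) :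
    HasDerivAt (fun t : ℝ => ⟪x + t • Y, Y⟫ / ‖x + t • Y‖ * ⟪Z, ∇ w (x + t • Y)⟫
        + ‖x + t • Y‖ * ⟪Z, hess w (x + t • Y) Y⟫)
      ((‖Y‖ ^ 2 - ⟪x, Y⟫ ^ 2) * ⟪Z, ∇ w x⟫ + 2 * ⟪x, Y⟫ * ⟪Z, hess w x Y⟫
        + ⟪Z, fderiv ℝ (hess w) x Y Y⟫) 0 := by
  have hline := hasDerivAt_add_smul x Y 0
  have h0 : x + (0 : ℝ) • Y = x := by simp
  have hx0 : x ≠ 0 := norm_ne_zero_iff.1 (by simp [hx])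
  have hnorm : HasDerivAt (fun t : ℝ => ‖x + t • Y‖) ⟪x, Y⟫ 0 := by
    simpa [hx] using hasDerivAt_norm_comp hline (by simpa using hx0)
  have hxY : HasDerivAt (fun t : ℝ => ⟪x + t • Y, Y⟫) (‖Y‖ ^ 2) 0 := by
    simpa using hline.inner ℝ (hasDerivAt_const 0 Y)
  have hgrad : HasDerivAt (fun t : ℝ => ⟪Z, ∇ w (x + t • Y)⟫) ⟪Z, hess w x Y⟫ 0 := by
    simpa using (hasDerivAt_const 0 Z).inner ℝ
      ((hasFDerivAt_gradient (hw.of_le (by norm_num))).comp_hasDerivAt_of_eq 0 hline h0.symm)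
  have hhess : HasDerivAt (fun t : ℝ => ⟪Z, hess w (x + t • Y) Y⟫)
      ⟪Z, fderiv ℝ (hess w) x Y Y⟫ 0 := by
    simpa using (hasDerivAt_const 0 Z).inner ℝ
      (((hasFDerivAt_hess hw).comp_hasDerivAt_of_eq 0 hline h0.symm).clm_apply
        (hasDerivAt_const 0 Y))
  have hquot := (hxY.fun_div hnorm (by simp [hx])).fun_mul hgrad
  have hprod := hnorm.fun_mul hhess
  refine (hquot.fun_add hprod).congr_deriv ?_
  simp only [h0, hx]
  ring

theorem hess_gradient_of_isLocalMax (hx : ‖x‖ = 1) (hw : ContDiffAt ℝ 2 w x)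
    (hmax : IsLocalMax (fun y => ‖y‖ * ‖∇ w y‖) x) :
    hess w x (∇ w x) = -(‖∇ w x‖ ^ 2 • x) := by
  refine ext_inner_right ℝ fun Y => ?_
  have hx0 : x ≠ 0 := norm_ne_zero_iff.1 (by simp [hx])
  have h := (isLocalMax_norm_mul_inner_gradient_line hmax Y).hasDerivAt_eq_zero
    (hasDerivAt_norm_mul_inner_gradient (by simpa using hw) (by simpa using hx0) (∇ w x))
  simp only [zero_smul, add_zero, hx, div_one, one_mul, real_inner_self_eq_norm_sq] at h
  rw [inner_hess_comm hw, inner_neg_left, inner_smul_left, conj_trivial]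
  linarith

theorem inner_fderiv_hess_le_of_isLocalMax (hx : ‖x‖ = 1) (hw : ContDiffAt ℝ 3 w x)
    (hmax : IsLocalMax (fun y => ‖y‖ * ‖∇ w y‖) x) (Y : E) :
    ⟪fderiv ℝ (hess w) x (∇ w x) Y, Y⟫ ≤
      -‖∇ w x‖ ^ 2 * ‖Y‖ ^ 2 + 3 * ‖∇ w x‖ ^ 2 * ⟪x, Y⟫ ^ 2 := by
  have hx0 : x ≠ 0 := norm_ne_zero_iff.1 (by simp [hx])
  have hw2 : ContDiffAt ℝ 2 w x := hw.of_le (by norm_num)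
  have hline : Tendsto (fun s : ℝ => x + s • Y) (𝓝 0) (𝓝 x) := by
    simpa using (hasDerivAt_add_smul x Y 0).continuousAt.tendsto
  have hsecond := nonpos_of_isLocalMax_of_hasDerivAt_of_hasDerivAt
    (isLocalMax_norm_mul_inner_gradient_line hmax Y)
    (((hline.eventually (hw2.eventually (by simp))).and (hline.eventually_ne hx0)).mono
      fun s hs => hasDerivAt_norm_mul_inner_gradient hs.1 hs.2 (∇ w x))
    (hasDerivAt_deriv_norm_mul_inner_gradient hx hw Y (∇ w x))
  have hcrit : ⟪∇ w x, hess w x Y⟫ = -(‖∇ w x‖ ^ 2 * ⟪x, Y⟫) := by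
    rw [← inner_hess_comm hw2, hess_gradient_of_isLocalMax hx hw2 hmax, inner_neg_left,
      inner_smul_left, conj_trivial]
  have hsymm : ⟪∇ w x, fderiv ℝ (hess w) x Y Y⟫ = ⟪fderiv ℝ (hess w) x (∇ w x) Y, Y⟫ := by
    rw [real_inner_comm, inner_fderiv_hess_comm hw]
  rw [hcrit, hsymm, real_inner_self_eq_norm_sq] at hsecond
  linarith

end GradientMaximum

section InteriorEstimate

variable {E : Type*} [NormedAddCommGroup E] [InnerProductSpace ℝ E] [FiniteDimensional ℝ E]
  {n : ℕ} {F v : E → ℝ} {b c x : E} {r e m K : ℝ}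

theorem gradient_sub_radialExt_innerSL (hx : ‖x‖ = 1) (hv : DifferentiableAt ℝ v x) :
    ∇ (v - radialExt c (innerSL ℝ b)) x = ∇ v x - tangentProj x b := by
  have hψ : ContDiffAt ℝ 1 (radialExt c (innerSL ℝ b)) x :=
    contDiffAt_radialExt hx ((innerSL ℝ b).contDiff).contDiffAt
  rw [gradient_sub hv (hψ.differentiableAt one_ne_zero), gradient_radialExt_innerSL c b hx]

theorem hess_gradient_sub_radialExt_of_isLocalMax (hx : ‖x‖ = 1) (hv : ContDiffAt ℝ 2 v x)
    (hv0 : ZeroHomogeneous v)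
    (hmax : IsLocalMax (fun y => ‖y‖ * ‖∇ (v - radialExt c (innerSL ℝ b)) y‖) x) :
    hess v x (∇ (v - radialExt c (innerSL ℝ b)) x) =
      -⟪x, b⟫ • ∇ (v - radialExt c (innerSL ℝ b)) x
        - ⟪∇ v x, ∇ (v - radialExt c (innerSL ℝ b)) x⟫ • x := by
  set ψ := radialExt c (innerSL ℝ b)
  have hψ : ContDiffAt ℝ 2 ψ x := contDiffAt_radialExt hx ((innerSL ℝ b).contDiff).contDiffAt
  have hw : ContDiffAt ℝ 2 (v - ψ) x := hv.sub hψ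
  set g := ∇ (v - ψ) x with hg_def
  have hg : g = ∇ v x - tangentProj x b :=
    gradient_sub_radialExt_innerSL hx (hv.differentiableAt two_ne_zero)
  have hxg : ⟪x, g⟫ = 0 := by
    rw [real_inner_comm]
    exact (hv0.sub (zeroHomogeneous_radialExt c _)).inner_gradient_self
      (hw.differentiableAt two_ne_zero)
  have hhess := hess_gradient_of_isLocalMax hx hw hmax
  rw [hess_sub hv hψ, sub_apply, sub_eq_iff_eq_add, ← hg_def] at hhess
  have hbg : ⟪tangentProj x b, g⟫ = ⟪b, g⟫ := by
    rw [inner_tangentProj_comm, tangentProj_of_inner_eq_zero hxg]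
  have hkg : ⟪∇ v x, g⟫ = ‖g‖ ^ 2 + ⟪b, g⟫ := by
    rw [← hbg, ← real_inner_self_eq_norm_sq, ← inner_add_left, hg, sub_add_cancel]
  rw [hhess, hess_radialExt_innerSL c b hx, tangentProj_of_inner_eq_zero hxg, hxg, hkg]
  module

theorem inner_fderiv_hess_gradient_sub_radialExt_le_of_isLocalMax (hx : ‖x‖ = 1)
    (hv : ContDiffAt ℝ 3 v x) (hv0 : ZeroHomogeneous v)
    (hmax : IsLocalMax (fun y => ‖y‖ * ‖∇ (v - radialExt c (innerSL ℝ b)) y‖) x) (Y : E) :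
    ⟪fderiv ℝ (hess v) x (∇ (v - radialExt c (innerSL ℝ b)) x) Y, Y⟫ ≤
      (12 * ‖b‖ * ‖∇ (v - radialExt c (innerSL ℝ b)) x‖
        - ‖∇ (v - radialExt c (innerSL ℝ b)) x‖ ^ 2) * ‖Y‖ ^ 2
        + 3 * ‖∇ (v - radialExt c (innerSL ℝ b)) x‖ ^ 2 * ⟪x, Y⟫ ^ 2 := by
  set ψ := radialExt c (innerSL ℝ b)
  have hψ : ContDiffAt ℝ 3 ψ x := contDiffAt_radialExt hx ((innerSL ℝ b).contDiff).contDiffAt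
  have hw : ContDiffAt ℝ 3 (v - ψ) x := hv.sub hψ
  have hxg : ⟪x, ∇ (v - ψ) x⟫ = 0 := by
    rw [real_inner_comm]
    exact (hv0.sub (zeroHomogeneous_radialExt c _)).inner_gradient_self
      (hw.differentiableAt three_ne_zero)
  have hthird := inner_fderiv_hess_le_of_isLocalMax hx hw hmax Y
  rw [fderiv_hess_sub hv hψ, sub_apply, sub_apply, inner_sub_left] at hthird
  have hψbound := (abs_le.1 (abs_inner_fderiv_hess_radialExt_innerSL_le c b hx hxg Y)).2
  linarith

-- With `A = logHess v x`, the witnesses are `τ = tr A⁻¹ - 1` and `Q = ⟪A⁻¹ ∇w, ∇v⟫`; the last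
-- conjunct is the logarithm of the determinant equation differentiated in the direction `∇w`.
theorem exists_interior_inequality (hn : Module.finrank ℝ E = n + 1) (hx : ‖x‖ = 1)
    (hv : ContDiffAt ℝ 3 v x) (hv0 : ZeroHomogeneous v)
    (hmax : IsLocalMax (fun y => ‖y‖ * ‖∇ (v - radialExt c (innerSL ℝ b)) y‖) x)
    (hb : ⟪x, b⟫ ≤ 0) (hpos : ∀ Y, Y ≠ 0 → 0 < ⟪logHess v x Y, Y⟫)
    (hF : DifferentiableAt ℝ F x) (hFx : 0 < F x)
    (hdet : ∀ᶠ y in 𝓝 x, ‖y‖ = 1 →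
      (logHess v y).det = F y * Real.exp (r * v y) * (1 + ‖∇ v y‖ ^ 2) ^ e) :
    ∃ τ Q : ℝ, 0 ≤ τ ∧ 1 ≤ (logHess v x).det * τ ^ n ∧
      ⟪∇ v x, ∇ (v - radialExt c (innerSL ℝ b)) x⟫ * Q ≤
        ‖∇ (v - radialExt c (innerSL ℝ b)) x‖ ^ 2 ∧
      ⟪∇ F x, ∇ (v - radialExt c (innerSL ℝ b)) x⟫ / F x
          + r * ⟪∇ v x, ∇ (v - radialExt c (innerSL ℝ b)) x⟫
          + 2 * e * (-⟪x, b⟫ * ⟪∇ v x, ∇ (v - radialExt c (innerSL ℝ b)) x⟫) / (1 + ‖∇ v x‖ ^ 2) ≤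
        (12 * ‖b‖ * ‖∇ (v - radialExt c (innerSL ℝ b)) x‖
            - ‖∇ (v - radialExt c (innerSL ℝ b)) x‖ ^ 2) * (1 + τ)
          + 3 * ‖∇ (v - radialExt c (innerSL ℝ b)) x‖ ^ 2 + 2 * (1 - ⟪x, b⟫) * Q
          - 2 * ⟪∇ v x, ∇ (v - radialExt c (innerSL ℝ b)) x⟫ := by
  have hv2 : ContDiffAt ℝ 2 v x := hv.of_le (by norm_num)
  have hkx : ⟪∇ v x, x⟫ = 0 := hv0.inner_gradient_self (hv.differentiableAt three_ne_zero)
  have hψ : ContDiffAt ℝ 3 (radialExt c (innerSL ℝ b)) x :=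
    contDiffAt_radialExt hx ((innerSL ℝ b).contDiff).contDiffAt
  have hhess := hess_gradient_sub_radialExt_of_isLocalMax hx hv2 hv0 hmax
  have hthird := inner_fderiv_hess_gradient_sub_radialExt_le_of_isLocalMax hx hv hv0 hmax
  have hxg : ⟪x, ∇ (v - radialExt c (innerSL ℝ b)) x⟫ = 0 := by
    rw [real_inner_comm]
    exact (hv0.sub (zeroHomogeneous_radialExt c _)).inner_gradient_self
      ((hv.sub hψ).differentiableAt three_ne_zero)
  set g := ∇ (v - radialExt c (innerSL ℝ b)) x
  obtain ⟨B, hB, hBA⟩ := exists_isPositive_comp_eq_id (inner_logHess_comm hv2) hpos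
  have hBx : B x = x := by
    conv_lhs => rw [← hv0.logHess_self hv2 hx]
    exact DFunLike.congr_fun hBA x
  obtain ⟨htrace, hdetB⟩ := one_le_trace_and_det_le_trace_sub_one_pow hn hB
    (norm_ne_zero_iff.1 (by simp [hx])) hBx
  have hdetAB : (logHess v x).det * B.det = 1 := by
    rw [mul_comm, ← det_comp, hBA]
    exact LinearMap.det_id
  have hdetA : 0 ≤ (logHess v x).det := by
    rw [hdet.self_of_nhds hx]
    positivity
  refine ⟨LinearMap.trace ℝ E B - 1, ⟪B g, ∇ v x⟫, by linarith,
    hdetAB.symm.le.trans (by gcongr), ?_, ?_⟩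
  · exact inner_mul_inner_inverse_logHess_le hB hBA (by linarith) hxg hhess
  · have htr := trace_comp_logHessDeriv hx hv hF hFx.ne' hBA hdet hxg
    have hle := trace_comp_logHessDeriv_le hB hBx hx hkx hxg hhess hthird
    rw [htr, hhess, inner_sub_right, inner_smul_right, inner_smul_right, hkx] at hle
    ring_nf at hle ⊢
    exact hle

theorem mul_add_mul_le_of_interior_inequality {a t ρ κ τ Q φ ζ D M : ℝ}
    (ht : 1 + 26 * a ≤ t) (hr : 0 ≤ r) (hτ : 0 ≤ τ) (hφ0 : 0 ≤ φ) (hφ : φ ≤ a) (hκρ : |κ| ≤ ρ * t)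
    (hκ : κ = t ^ 2 + ζ) (hζ : |ζ| ≤ a * t) (hD : |D| ≤ M * t) (hQ : κ * Q ≤ t ^ 2)
    (h : D + r * κ + 2 * e * (φ * κ) / (1 + ρ ^ 2) ≤
      (12 * a * t - t ^ 2) * (1 + τ) + 3 * t ^ 2 + 2 * (1 + φ) * Q - 2 * κ) :
    t * τ + r * t ≤ 2 * (M + |e| * a + 18 * a + 4) := by
  have ha : 0 ≤ a := hφ0.trans hφ
  have htpos : 0 < t := by linarith
  obtain ⟨hζ1, hζ2⟩ := abs_le.1 hζ
  have hκt : t ^ 2 / 2 ≤ κ := by nlinarith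
  have hQ2 : Q ≤ 2 := by
    by_contra! hlt
    nlinarith [pow_pos htpos 2]
  have hfrac : |2 * e * (φ * κ) / (1 + ρ ^ 2)| ≤ |e| * a * t := by
    rw [abs_div, abs_of_pos (show 0 < 1 + ρ ^ 2 by positivity), div_le_iff₀ (by positivity)]
    calc |2 * e * (φ * κ)| = 2 * |e| * (φ * |κ|) := by simp [abs_mul, abs_of_nonneg hφ0]
      _ ≤ 2 * |e| * (a * (ρ * t)) := by gcongr
      _ = |e| * a * t * (2 * ρ) := by ring
      _ ≤ |e| * a * t * (1 + ρ ^ 2) := by gcongr; nlinarith [sq_nonneg (ρ - 1)]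
  have hQφ : 2 * (1 + φ) * Q ≤ 4 * (1 + a) * t := by
    have h1 : 2 * (1 + φ) * Q ≤ 2 * (1 + φ) * 2 := by gcongr
    nlinarith
  have hτt : 12 * a * t * τ ≤ t ^ 2 * τ / 2 := by
    have : 12 * a * (t * τ) ≤ t / 2 * (t * τ) := by gcongr; linarith
    linarith
  have hrκ : r * (t ^ 2 / 2) ≤ r * κ := by gcongr
  have key : t * (t * τ + r * t) ≤ t * (2 * (M + |e| * a + 18 * a + 4)) := by
    linarith [(abs_le.1 hfrac).1, (abs_le.1 hD).1]
  exact le_of_mul_le_mul_left key htpos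

theorem le_rpow_of_one_le_mul_pow {q s t τ K L : ℝ} (hq : 1 < q) (hs : 0 < s) (ht : 0 < t)
    (hst : s ≤ 2 * t) (hτ : 0 ≤ τ) (hL : t * τ ≤ L) (hK : 0 ≤ K)
    (h : 1 ≤ K * s ^ ((n : ℝ) + 1 - q) * τ ^ n) :
    s ≤ (K * (2 * L) ^ n) ^ (q - 1)⁻¹ := by
  have hL0 : 0 ≤ L := (by positivity : 0 ≤ t * τ).trans hL
  have hle : s ^ n ≤ K * s ^ ((n : ℝ) + 1 - q) * (2 * L) ^ n :=
    calc s ^ n = s ^ n * 1 := (mul_one _).symm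
      _ ≤ (2 * t) ^ n * (K * s ^ ((n : ℝ) + 1 - q) * τ ^ n) := by gcongr
      _ = K * s ^ ((n : ℝ) + 1 - q) * (2 * (t * τ)) ^ n := by rw [mul_pow, mul_pow, mul_pow]; ring
      _ ≤ K * s ^ ((n : ℝ) + 1 - q) * (2 * L) ^ n := by gcongr
  have hsplit : s ^ n = s ^ ((n : ℝ) + 1 - q) * s ^ (q - 1) := by
    rw [← Real.rpow_add hs, ← Real.rpow_natCast]
    congr 1
    ring
  have hpow : s ^ (q - 1) ≤ K * (2 * L) ^ n := by
    rw [hsplit] at hle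
    exact le_of_mul_le_mul_left (by linarith) (Real.rpow_pos_of_pos hs ((n : ℝ) + 1 - q))
  exact (Real.le_rpow_inv_iff_of_pos hs.le (by positivity) (by linarith)).2 hpow

theorem exists_one_le_det_mul_pow_of_isLocalMax (hn : Module.finrank ℝ E = n + 1) (hx : ‖x‖ = 1)
    (hv : ContDiffAt ℝ 3 v x) (hv0 : ZeroHomogeneous v)
    (hmax : IsLocalMax (fun y => ‖y‖ * ‖∇ (v - radialExt c (innerSL ℝ b)) y‖) x)
    (hb : ⟪x, b⟫ ≤ 0) (hpos : ∀ Y, Y ≠ 0 → 0 < ⟪logHess v x Y, Y⟫)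
    (hF : DifferentiableAt ℝ F x) (hm : 0 < m) (hmF : m ≤ F x) (hK : ‖∇ F x‖ ≤ K) (hr : 0 ≤ r)
    (hdet : ∀ᶠ y in 𝓝 x, ‖y‖ = 1 →
      (logHess v y).det = F y * Real.exp (r * v y) * (1 + ‖∇ v y‖ ^ 2) ^ e)
    (hlarge : 1 + 26 * ‖b‖ ≤ ‖∇ (v - radialExt c (innerSL ℝ b)) x‖) :
    ∃ τ : ℝ, 0 ≤ τ ∧ 1 ≤ (logHess v x).det * τ ^ n ∧
      ‖∇ (v - radialExt c (innerSL ℝ b)) x‖ * τ + r * ‖∇ (v - radialExt c (innerSL ℝ b)) x‖ ≤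
        2 * (K / m + |e| * ‖b‖ + 18 * ‖b‖ + 4) := by
  obtain ⟨τ, Q, hτ, hdetτ, hQ, hineq⟩ :=
    exists_interior_inequality hn hx hv hv0 hmax hb hpos hF (hm.trans_le hmF) hdet
  refine ⟨τ, hτ, hdetτ, ?_⟩
  have hg : ∇ (v - radialExt c (innerSL ℝ b)) x = ∇ v x - tangentProj x b :=
    gradient_sub_radialExt_innerSL hx (hv.differentiableAt three_ne_zero)
  set g := ∇ (v - radialExt c (innerSL ℝ b)) x
  refine mul_add_mul_le_of_interior_inequality (φ := -⟪x, b⟫) (ζ := ⟪tangentProj x b, g⟫)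
    (ρ := ‖∇ v x‖) (κ := ⟪∇ v x, g⟫) (D := ⟪∇ F x, g⟫ / F x) hlarge hr hτ (by linarith) ?_
    (abs_real_inner_le_norm _ _) ?_ ?_ ?_ hQ (hineq.trans_eq (by ring))
  · simpa [hx] using (neg_le_abs _).trans (abs_real_inner_le_norm x b)
  · rw [← real_inner_self_eq_norm_sq, ← inner_add_left, hg, sub_add_cancel]
  · exact (abs_real_inner_le_norm _ _).trans (by gcongr; exact norm_tangentProj_le hx b)
  · rw [abs_div, abs_of_pos (hm.trans_le hmF), div_mul_eq_mul_div]
    have hK0 : 0 ≤ K := (norm_nonneg _).trans hK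
    exact div_le_div₀ (by positivity) ((abs_real_inner_le_norm _ _).trans (by gcongr)) hm hmF

theorem exists_forall_norm_gradient_le_of_isLocalMax (hn : Module.finrank ℝ E = n + 1) (b c : E)
    {p q : ℝ} (hq : 1 < q) (hqp : q ≤ p) (hm : 0 < m) (K : ℝ) :
    ∃ C : ℝ, ∀ (v F : E → ℝ) (x : E), ‖x‖ = 1 → ContDiffAt ℝ 3 v x → ZeroHomogeneous v →
      IsLocalMax (fun y => ‖y‖ * ‖∇ (v - radialExt c (innerSL ℝ b)) y‖) x → ⟪x, b⟫ ≤ 0 →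
      (∀ Y, Y ≠ 0 → 0 < ⟪logHess v x Y, Y⟫) →
      DifferentiableAt ℝ F x → m ≤ F x → F x ≤ K → ‖∇ F x‖ ≤ K →
      (∀ᶠ y in 𝓝 x, ‖y‖ = 1 → (logHess v y).det =
        F y * Real.exp ((p - q) * v y) * (1 + ‖∇ v y‖ ^ 2) ^ (((n : ℝ) + 1 - q) / 2)) →
      ‖∇ (v - radialExt c (innerSL ℝ b)) x‖ ≤ C := by
  set L := 2 * (K / m + |((n : ℝ) + 1 - q) / 2| * ‖b‖ + 18 * ‖b‖ + 4)
  refine ⟨max (1 + 26 * ‖b‖) (max (L / (p - q)) ((K * (2 * L) ^ n) ^ (q - 1)⁻¹ + ‖b‖)), ?_⟩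
  intro v F x hx hv hv0 hmax hb hpos hF hmF hFK hK hdet
  by_contra! hlt
  obtain ⟨hlarge, hp, hs⟩ : _ ∧ _ ∧ _ := by simpa only [max_lt_iff] using hlt
  have hg : ∇ (v - radialExt c (innerSL ℝ b)) x = ∇ v x - tangentProj x b :=
    gradient_sub_radialExt_innerSL hx (hv.differentiableAt three_ne_zero)
  obtain ⟨τ, hτ, hdetτ, hL⟩ := exists_one_le_det_mul_pow_of_isLocalMax hn hx hv hv0 hmax hb hpos
    hF hm hmF hK (sub_nonneg.2 hqp) hdet hlarge.le
  have hbproj := norm_tangentProj_le hx b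
  have hgv := norm_sub_le (∇ v x) (tangentProj x b)
  have hvg := norm_le_norm_add_norm_sub' (∇ v x) (tangentProj x b)
  rw [← hg] at hgv hvg
  set t := ‖∇ (v - radialExt c (innerSL ℝ b)) x‖
  have ht : 0 < t := (by positivity : 0 < 1 + 26 * ‖b‖).trans hlarge
  rcases hqp.eq_or_lt with rfl | hlt_pq
  · set s := √(1 + ‖∇ v x‖ ^ 2)
    have hs_le : s ≤ 1 + ‖∇ v x‖ :=
      Real.sqrt_le_iff.2 ⟨by positivity, by linarith [norm_nonneg (∇ v x)]⟩
    have hle_s : ‖∇ v x‖ ≤ s := Real.le_sqrt_of_sq_le (by linarith)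
    have hspow : (1 + ‖∇ v x‖ ^ 2) ^ (((n : ℝ) + 1 - q) / 2) = s ^ ((n : ℝ) + 1 - q) := by
      rw [Real.rpow_div_two_eq_sqrt _ (by positivity)]
    rw [hdet.self_of_nhds hx, hspow, sub_self, zero_mul, Real.exp_zero, mul_one] at hdetτ
    have hK0 : 0 ≤ K := hm.le.trans (hmF.trans hFK)
    have hdetK : 1 ≤ K * s ^ ((n : ℝ) + 1 - q) * τ ^ n := hdetτ.trans (by gcongr)
    have := le_rpow_of_one_le_mul_pow (L := L) hq (by positivity : 0 < s) ht
      (by linarith [norm_nonneg b]) hτ (by simpa using hL) hK0 hdetK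
    linarith
  · rw [div_lt_iff₀ (sub_pos.2 hlt_pq)] at hp
    linarith [mul_nonneg ht.le hτ]

end InteriorEstimate

section CapGeometry

variable {n : ℕ} {θ : ℝ} {ξ : Euc n}

/-- The centre `cos θ • e` of the sphere containing the cap. -/
def capCenter (n : ℕ) (θ : ℝ) : Euc n := Real.cos θ • eVec n

theorem capCenter_add_sphNormal (ξ : Euc n) : capCenter n θ + sphNormal n θ ξ = ξ :=
  add_sub_cancel _ _

theorem sphNormal_capCenter_add (y : Euc n) : sphNormal n θ (capCenter n θ + y) = y :=
  add_sub_cancel_left _ _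

theorem inner_eVec (ξ : Euc n) : ⟪ξ, eVec n⟫ = -ξ (Fin.last n) := by
  simp [eVec, EuclideanSpace.inner_single_right]

theorem norm_eVec : ‖eVec n‖ = 1 := by
  simp [eVec]

theorem continuous_sphNormal : Continuous (sphNormal n θ) :=
  continuous_id.sub continuous_const

theorem isCompact_cap : IsCompact (cap n θ) := by
  have hclosed : IsClosed (cap n θ) :=
    (isClosed_le continuous_const (EuclideanSpace.proj (Fin.last n)).continuous).inter
      (isClosed_eq continuous_sphNormal.norm continuous_const)
  refine (isCompact_closedBall (capCenter n θ) 1).of_isClosed_subset hclosed fun ξ hξ => ?_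
  rw [mem_closedBall_iff_norm]
  exact hξ.2.le

theorem mem_cap_iff : ξ ∈ cap n θ ↔ ⟪ξ, eVec n⟫ ≤ 0 ∧ ‖sphNormal n θ ξ‖ = 1 := by
  rw [inner_eVec, neg_nonpos]
  rfl

theorem capBdry_subset_cap : capBdry n θ ⊆ cap n θ := fun _ hξ => ⟨hξ.1.ge, hξ.2⟩

theorem mem_capBdry_iff :
    ξ ∈ capBdry n θ ↔ ⟪ξ, eVec n⟫ = 0 ∧ ‖ξ‖ ^ 2 = Real.sin θ ^ 2 := by
  rw [inner_eVec, neg_eq_zero]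
  refine and_congr_right fun h0 => ?_
  rw [← pow_eq_one_iff_of_nonneg (norm_nonneg _) two_ne_zero, sphNormal, norm_sub_sq_real,
    inner_smul_right, inner_eVec, h0, norm_smul, norm_eVec, Real.norm_eq_abs, mul_one, sq_abs,
    Real.sin_sq]
  constructor <;> intro h <;> linarith

theorem inner_sphNormal_conormal (hθ : Real.sin θ ≠ 0) (hξ : ξ ∈ capBdry n θ) :
    ⟪sphNormal n θ ξ, conormal n θ ξ⟫ = 0 := by
  obtain ⟨he, hnorm⟩ := mem_capBdry_iff.1 hξ
  simp only [sphNormal, conormal, inner_sub_left, inner_add_right, inner_smul_left,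
    inner_smul_right, real_inner_comm ξ (eVec n), he, real_inner_self_eq_norm_sq, hnorm, norm_eVec,
    conj_trivial, Real.cot_eq_cos_div_sin]
  field_simp
  ring

theorem inner_eVec_conormal (hξ : ξ ∈ capBdry n θ) :
    ⟪eVec n, conormal n θ ξ⟫ = Real.sin θ := by
  rw [conormal, inner_add_right, inner_smul_right, inner_smul_right, real_inner_comm,
    (mem_capBdry_iff.1 hξ).1, real_inner_self_eq_norm_sq, norm_eVec]
  ring

end CapGeometry

section CapLogHessian

open InnerProductSpace (rankOne)

variable {n : ℕ} {θ : ℝ} {ξ : Euc n} {h : Euc n → ℝ}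

theorem tproj_eq_tangentProj (ξ : Euc n) : tproj n θ ξ = tangentProj (sphNormal n θ ξ) := rfl

theorem radialExt_sphNormal (u : Euc n → ℝ) (hξ : ‖sphNormal n θ ξ‖ = 1) :
    radialExt (capCenter n θ) u (sphNormal n θ ξ) = u ξ := by
  rw [radialExt_of_norm_eq_one _ _ hξ, capCenter_add_sphNormal]

theorem sgrad_eq_gradient_radialExt {u : Euc n → ℝ} (hξ : ‖sphNormal n θ ξ‖ = 1)
    (hu : DifferentiableAt ℝ u ξ) :
    sgrad n θ u ξ = ∇ (radialExt (capCenter n θ) u) (sphNormal n θ ξ) := by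
  rw [gradient_radialExt hξ (by rwa [capCenter_add_sphNormal]), capCenter_add_sphNormal]
  rfl

theorem sgrad_eq_smul_sgrad_log (hh : DifferentiableAt ℝ h ξ) (h0 : h ξ ≠ 0) :
    sgrad n θ h ξ = h ξ • sgrad n θ (fun x => Real.log (h x)) ξ := by
  rw [sgrad, sgrad, gradient_log hh h0, map_smul, smul_inv_smul₀ h0]

/-- The function `log h` on the cap, extended `0`-homogeneously from the centre of the sphere. -/
def capLog (n : ℕ) (θ : ℝ) (h : Euc n → ℝ) : Euc n → ℝ :=
  radialExt (capCenter n θ) fun x => Real.log (h x)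

theorem zeroHomogeneous_capLog (h : Euc n → ℝ) : ZeroHomogeneous (capLog n θ h) :=
  zeroHomogeneous_radialExt _ _

theorem contDiffAt_capLog {k : WithTop ℕ∞} (hξ : ‖sphNormal n θ ξ‖ = 1) (hh : ContDiffAt ℝ k h ξ)
    (h0 : h ξ ≠ 0) : ContDiffAt ℝ k (capLog n θ h) (sphNormal n θ ξ) :=
  contDiffAt_radialExt hξ (by rw [capCenter_add_sphNormal]; exact hh.log h0)

theorem sgrad_log_eq_gradient_capLog (hξ : ‖sphNormal n θ ξ‖ = 1) (hh : DifferentiableAt ℝ h ξ)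
    (h0 : h ξ ≠ 0) :
    sgrad n θ (fun x => Real.log (h x)) ξ = ∇ (capLog n θ h) (sphNormal n θ ξ) :=
  sgrad_eq_gradient_radialExt hξ (hh.log h0)

theorem logHess_capLog (hξ : ‖sphNormal n θ ξ‖ = 1) (hh : ContDiffAt ℝ 2 h ξ) (h0 : h ξ ≠ 0) :
    logHess (capLog n θ h) (sphNormal n θ ξ) =
      (h ξ)⁻¹ • thessOp n θ h ξ + tproj n θ ξ + normalPart n θ ξ := by
  have hcξ := capCenter_add_sphNormal (θ := θ) ξ
  ext1 Y
  rw [logHess, ← sgrad_log_eq_gradient_capLog hξ (hh.differentiableAt two_ne_zero) h0, sgrad,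
    gradient_log (hh.differentiableAt two_ne_zero) h0, thessOp, normalPart, tproj_eq_tangentProj,
    capLog]
  set x := sphNormal n θ ξ
  simp only [sub_apply, add_apply, smul_apply, InnerProductSpace.rankOne_apply,
    ContinuousLinearMap.id_apply, ContinuousLinearMap.comp_apply,
    ContinuousLinearMap.smulRight_apply, innerSL_apply_apply]
  rw [hess_radialExt hξ (by rw [hcξ]; exact hh.log h0), hcξ, hess_log hh h0,
    gradient_log (hh.differentiableAt two_ne_zero) h0]
  have hcomm := inner_tangentProj_comm x (∇ h ξ) Y
  simp only [map_sub, map_smul, inner_add_left, inner_smul_left, inner_smul_right, conj_trivial,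
    real_inner_comm (∇ h ξ) x, hcomm]
  linear_combination (norm := module) (-1 : ℝ) • tangentProj_apply x Y

theorem hessOp_eq_comp_logHess (hξ : ‖sphNormal n θ ξ‖ = 1) (hh : ContDiffAt ℝ 2 h ξ)
    (h0 : h ξ ≠ 0) :
    hessOp n θ h ξ =
      (h ξ • .id ℝ (Euc n) + (1 - h ξ) • rankOne ℝ (sphNormal n θ ξ) (sphNormal n θ ξ)) ∘L
        logHess (capLog n θ h) (sphNormal n θ ξ) := by
  rw [logHess_capLog hξ hh h0]
  ext1 Y
  have hthess : ⟪sphNormal n θ ξ, thessOp n θ h ξ Y⟫ = 0 := by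
    rw [real_inner_comm]
    simp [thessOp, tproj_eq_tangentProj, inner_sub_left, inner_smul_left,
      inner_tangentProj_left hξ]
  have htproj : ⟪sphNormal n θ ξ, tproj n θ ξ Y⟫ = 0 := by
    rw [tproj_eq_tangentProj, real_inner_comm, inner_tangentProj_left hξ]
  simp only [hessOp, normalPart, add_apply, smul_apply, ContinuousLinearMap.comp_apply,
    ContinuousLinearMap.id_apply, InnerProductSpace.rankOne_apply, inner_add_right,
    inner_smul_right, hthess, htproj, ContinuousLinearMap.smulRight_apply, innerSL_apply_apply,
    real_inner_self_eq_norm_sq, hξ, smul_add, smul_inv_smul₀ h0]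
  module

theorem sdet_eq_pow_mul_det_logHess (hξ : ‖sphNormal n θ ξ‖ = 1) (hh : ContDiffAt ℝ 2 h ξ)
    (h0 : h ξ ≠ 0) :
    sdet n θ h ξ = h ξ ^ n * (logHess (capLog n θ h) (sphNormal n θ ξ)).det := by
  have hn : Module.finrank ℝ (Euc n) = n + 1 := by simp
  rw [← det_smul_id_add_smul_rankOne hn hξ h0, ← det_comp, ← hessOp_eq_comp_logHess hξ hh h0]
  rfl

theorem inner_logHess_capLog_of_isTangent (hξ : ‖sphNormal n θ ξ‖ = 1) (hh : ContDiffAt ℝ 2 h ξ)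
    (h0 : h ξ ≠ 0) {X : Euc n} (hX : IsTangent n θ ξ X) :
    ⟪logHess (capLog n θ h) (sphNormal n θ ξ) X, X⟫ =
      (h ξ)⁻¹ * (shess n θ h ξ X X + h ξ * ⟪X, X⟫) := by
  have hxX : ⟪sphNormal n θ ξ, X⟫ = 0 := by rwa [real_inner_comm]
  have hproj : tproj n θ ξ X = X := tangentProj_of_inner_eq_zero hxX
  have hself : ⟪tproj n θ ξ (hess h ξ X), X⟫ = ⟪hess h ξ X, X⟫ := by
    rw [tproj_eq_tangentProj, inner_tangentProj_comm, tangentProj_of_inner_eq_zero hxX]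
  simp only [logHess_capLog hξ hh h0, thessOp, normalPart, shess, add_apply, sub_apply, smul_apply,
    ContinuousLinearMap.comp_apply, ContinuousLinearMap.smulRight_apply, innerSL_apply_apply, hproj,
    hxX, inner_add_left, inner_sub_left, inner_smul_left, conj_trivial, hself]
  field_simp
  ring

theorem IsConvexSol.inner_logHess_capLog_pos (hconv : IsConvexSol n θ h) (hξ : ξ ∈ cap n θ)
    (hh : ContDiffAt ℝ 2 h ξ) (hpos : 0 < h ξ) {Y : Euc n} (hY : Y ≠ 0) :
    0 < ⟪logHess (capLog n θ h) (sphNormal n θ ξ) Y, Y⟫ := by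
  have hx := hξ.2
  rw [inner_logHess_self (zeroHomogeneous_capLog h) (contDiffAt_capLog hx hh hpos.ne') hx]
  rcases eq_or_ne (tangentProj (sphNormal n θ ξ) Y) 0 with h0 | h0
  · have hY' : ⟪sphNormal n θ ξ, Y⟫ ≠ 0 := by
      intro hxY
      exact hY (by rw [← tangentProj_of_inner_eq_zero hxY, h0])
    rw [h0, map_zero, inner_zero_left, zero_add]
    positivity
  · have htan := inner_tangentProj_left hx Y
    rw [inner_logHess_capLog_of_isTangent hx hh hpos.ne' htan]
    have := hconv ξ hξ _ htan h0
    positivity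

theorem SolvesEq.det_logHess_capLog {p q : ℝ} {f : Euc n → ℝ} (hsol : SolvesEq n θ p q f h)
    (hξ : ξ ∈ cap n θ) (hh : ContDiffAt ℝ 2 h ξ) (hpos : 0 < h ξ) :
    (logHess (capLog n θ h) (sphNormal n θ ξ)).det =
      f ξ * Real.exp ((p - q) * capLog n θ h (sphNormal n θ ξ)) *
        (1 + ‖∇ (capLog n θ h) (sphNormal n θ ξ)‖ ^ 2) ^ (((n : ℝ) + 1 - q) / 2) := by
  have hdiff := hh.differentiableAt two_ne_zero
  have heq := hsol ξ hξ
  rw [sdet_eq_pow_mul_det_logHess hξ.2 hh hpos.ne', eqRHS, sgrad_eq_smul_sgrad_log hdiff hpos.ne',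
    sgrad_log_eq_gradient_capLog hξ.2 hdiff hpos.ne', norm_smul, Real.norm_of_nonneg hpos.le] at heq
  set t := ‖∇ (capLog n θ h) (sphNormal n θ ξ)‖
  have hpow : (h ξ ^ 2 + (h ξ * t) ^ 2) ^ (((n : ℝ) + 1 - q) / 2) =
      h ξ ^ ((n : ℝ) + 1 - q) * (1 + t ^ 2) ^ (((n : ℝ) + 1 - q) / 2) := by
    rw [show h ξ ^ 2 + (h ξ * t) ^ 2 = h ξ ^ 2 * (1 + t ^ 2) by ring,
      Real.mul_rpow (by positivity) (by positivity), Real.rpow_div_two_eq_sqrt _ (by positivity),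
      Real.sqrt_sq hpos.le]
  have hexp : Real.exp ((p - q) * capLog n θ h (sphNormal n θ ξ)) = h ξ ^ (p - q) := by
    rw [capLog, radialExt_sphNormal _ hξ.2, Real.rpow_def_of_pos hpos, mul_comm]
  have hsplit : h ξ ^ (p - 1) * h ξ ^ ((n : ℝ) + 1 - q) = h ξ ^ n * h ξ ^ (p - q) := by
    rw [← Real.rpow_natCast, ← Real.rpow_add hpos, ← Real.rpow_add hpos]
    congr 1
    ring
  rw [hpow] at heq
  rw [hexp]
  refine mul_left_cancel₀ (pow_pos hpos n).ne' (heq.trans ?_)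
  linear_combination f ξ * (1 + t ^ 2) ^ (((n : ℝ) + 1 - q) / 2) * hsplit

end CapLogHessian

section CapBoundary

variable {n : ℕ} {θ : ℝ} {ξ g : Euc n} {h w : Euc n → ℝ}

theorem inner_eq_zero_of_inner_sphNormal_of_inner_conormal (hθ : Real.sin θ ≠ 0)
    (hν : ⟪g, sphNormal n θ ξ⟫ = 0) (hμ : ⟪g, conormal n θ ξ⟫ = 0) :
    ⟪g, ξ⟫ = 0 ∧ ⟪g, eVec n⟫ = 0 := by
  rw [sphNormal, inner_sub_right, inner_smul_right] at hν
  rw [conormal, inner_add_right, inner_smul_right, inner_smul_right,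
    Real.cot_eq_cos_div_sin] at hμ
  field_simp at hμ
  have he : ⟪g, eVec n⟫ = 0 := by
    linear_combination hμ - Real.cos θ * hν - ⟪g, eVec n⟫ * Real.sin_sq_add_cos_sq θ
  exact ⟨by simpa [he] using hν, he⟩

theorem exists_capBdry_curve (hθ : 0 < Real.sin θ) (hξ : ξ ∈ capBdry n θ) (hgξ : ⟪g, ξ⟫ = 0)
    (hge : ⟪g, eVec n⟫ = 0) :
    ∃ γ : ℝ → Euc n, γ 0 = ξ ∧ HasDerivAt γ g 0 ∧ ∀ s, γ s ∈ capBdry n θ := by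
  obtain ⟨hξe, hnorm⟩ := mem_capBdry_iff.1 hξ
  have hunit : ‖(Real.sin θ)⁻¹ • ξ‖ = 1 := by
    rw [norm_smul, (pow_left_inj₀ (norm_nonneg ξ) hθ.le two_ne_zero).1 hnorm,
      Real.norm_of_nonneg (inv_nonneg.2 hθ.le), inv_mul_cancel₀ hθ.ne']
  have horth : ⟪(Real.sin θ)⁻¹ • ξ, (Real.sin θ)⁻¹ • g⟫ = 0 := by
    rw [inner_smul_left, inner_smul_right, real_inner_comm, hgξ, mul_zero, mul_zero]
  obtain ⟨γ, hγ0, hγ, hγ1, hspan⟩ := exists_sphere_curve hunit horth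
  refine ⟨fun s => Real.sin θ • γ s, ?_, ?_, fun s => mem_capBdry_iff.2 ⟨?_, ?_⟩⟩
  · simp only [hγ0, smul_inv_smul₀ hθ.ne']
  · exact (hγ.const_smul (Real.sin θ)).congr_deriv (smul_inv_smul₀ hθ.ne' g)
  · obtain ⟨a, b, hab⟩ := Submodule.mem_span_pair.1 (hspan s)
    simp [← hab, inner_add_left, inner_smul_left, hξe, hge]
  · rw [norm_smul, hγ1, mul_one, Real.norm_eq_abs, sq_abs]

theorem exists_inward_cap_curve (hθ : 0 < Real.sin θ) (hξ : ξ ∈ capBdry n θ) :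
    ∃ γ : ℝ → Euc n, γ 0 = ξ ∧ HasDerivAt γ (-conormal n θ ξ) 0 ∧
      ∀ᶠ s in 𝓝[>] 0, γ s ∈ cap n θ := by
  have hνμ : ⟪sphNormal n θ ξ, -conormal n θ ξ⟫ = 0 := by
    rw [inner_neg_right, inner_sphNormal_conormal hθ.ne' hξ, neg_zero]
  obtain ⟨γ, hγ0, hγ, hγ1, -⟩ := exists_sphere_curve hξ.2 hνμ
  have hγc0 : capCenter n θ + γ 0 = ξ := by rw [hγ0, capCenter_add_sphNormal]
  have hγc : HasDerivAt (fun s => capCenter n θ + γ s) (-conormal n θ ξ) 0 := hγ.const_add _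
  refine ⟨_, hγc0, hγc, ?_⟩
  have hheight : HasDerivAt (fun s => -⟪capCenter n θ + γ s, eVec n⟫) (Real.sin θ) 0 := by
    refine (hγc.inner ℝ (hasDerivAt_const 0 (eVec n))).neg.congr_deriv ?_
    rw [inner_zero_right, zero_add, inner_neg_left, neg_neg, real_inner_comm,
      inner_eVec_conormal hξ]
  filter_upwards [eventually_nhdsGT_lt_of_hasDerivAt_pos hheight hθ] with s hs
  rw [hγc0, (mem_capBdry_iff.1 hξ).1, neg_lt_neg_iff] at hs
  exact mem_cap_iff.2 ⟨hs.le, by rw [sphNormal_capCenter_add, hγ1]⟩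

theorem hasDerivAt_gradient_comp_sphNormal {γ : ℝ → Euc n} {γ' : Euc n} {s : ℝ}
    (hw : ContDiffAt ℝ 2 w (sphNormal n θ (γ s))) (hγ : HasDerivAt γ γ' s) :
    HasDerivAt (fun t => ∇ w (sphNormal n θ (γ t))) (hess w (sphNormal n θ (γ s)) γ') s :=
  (hasFDerivAt_gradient hw).comp_hasDerivAt (f := fun t => sphNormal n θ (γ t)) s
    (hγ.sub_const _)

theorem inner_hess_gradient_conormal_of_neumann (hθ : 0 < Real.sin θ) (hw0 : ZeroHomogeneous w)
    (hneumann : ∀ ζ ∈ capBdry n θ, ⟪∇ w (sphNormal n θ ζ), conormal n θ ζ⟫ = 0)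
    (hξ : ξ ∈ capBdry n θ) (hw : ContDiffAt ℝ 2 w (sphNormal n θ ξ)) :
    ⟪hess w (sphNormal n θ ξ) (∇ w (sphNormal n θ ξ)), conormal n θ ξ⟫ =
      -(Real.cot θ * ‖∇ w (sphNormal n θ ξ)‖ ^ 2) := by
  obtain ⟨hgξ, hge⟩ := inner_eq_zero_of_inner_sphNormal_of_inner_conormal hθ.ne'
    (hw0.inner_gradient_self (hw.differentiableAt two_ne_zero)) (hneumann ξ hξ)
  obtain ⟨γ, rfl, hγ, hγmem⟩ := exists_capBdry_curve hθ hξ hgξ hge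
  have hconormal : HasDerivAt (fun s => conormal n θ (γ s))
      (Real.cot θ • ∇ w (sphNormal n θ (γ 0))) 0 :=
    (hγ.const_smul (Real.cot θ)).add_const _
  have hderiv := (hasDerivAt_gradient_comp_sphNormal hw hγ).inner ℝ hconormal
  rw [show (fun s => ⟪∇ w (sphNormal n θ (γ s)), conormal n θ (γ s)⟫) = fun _ => 0 from
    funext fun s => hneumann _ (hγmem s)] at hderiv
  have h0 := hderiv.unique (hasDerivAt_const (0 : ℝ) (0 : ℝ))
  rw [inner_smul_right, real_inner_self_eq_norm_sq] at h0
  linarith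

theorem gradient_eq_zero_of_isMaxOn_cap_of_neumann (hθ : 0 < Real.sin θ) (hcot : 0 < Real.cot θ)
    (hw0 : ZeroHomogeneous w)
    (hneumann : ∀ ζ ∈ capBdry n θ, ⟪∇ w (sphNormal n θ ζ), conormal n θ ζ⟫ = 0)
    (hξ : ξ ∈ capBdry n θ) (hw : ContDiffAt ℝ 2 w (sphNormal n θ ξ))
    (hmax : IsMaxOn (fun ζ => ‖∇ w (sphNormal n θ ζ)‖) (cap n θ) ξ) :
    ∇ w (sphNormal n θ ξ) = 0 := by
  by_contra hg
  obtain ⟨γ, rfl, hγ, hγmem⟩ := exists_inward_cap_curve hθ hξ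
  have hderiv : HasDerivAt (fun s => ‖∇ w (sphNormal n θ (γ s))‖ ^ 2)
      (2 * (Real.cot θ * ‖∇ w (sphNormal n θ (γ 0))‖ ^ 2)) 0 := by
    refine (hasDerivAt_gradient_comp_sphNormal hw hγ).norm_sq.congr_deriv ?_
    rw [← inner_hess_comm hw, inner_neg_right,
      inner_hess_gradient_conormal_of_neumann hθ hw0 hneumann hξ hw, neg_neg]
  have hincr := eventually_nhdsGT_lt_of_hasDerivAt_pos hderiv (by positivity)
  obtain ⟨s, hs, hmem⟩ := (hincr.and hγmem).exists
  exact hs.not_ge (pow_le_pow_left₀ (norm_nonneg _) (hmax hmem) 2)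

/-- The vector `b` for which subtracting the linear function `⟪b, ·⟫` from `log h` turns the Robin
condition `∇_μ h = cot θ * h` into the Neumann condition `∇_μ (log h - ⟪b, ·⟫) = 0`. -/
def neumannVec (n : ℕ) (θ : ℝ) : Euc n := (Real.cos θ / Real.sin θ ^ 2) • eVec n

/-- The function `log h - ⟪neumannVec n θ, ·⟫` on the cap, extended `0`-homogeneously from the
centre of the sphere. -/
def neumannLog (n : ℕ) (θ : ℝ) (h : Euc n → ℝ) : Euc n → ℝ :=
  capLog n θ h - radialExt (capCenter n θ) (innerSL ℝ (neumannVec n θ))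

theorem inner_neumannVec_conormal (hθ : Real.sin θ ≠ 0) (hξ : ξ ∈ capBdry n θ) :
    ⟪neumannVec n θ, conormal n θ ξ⟫ = Real.cot θ := by
  rw [neumannVec, inner_smul_left, inner_eVec_conormal hξ, Real.cot_eq_cos_div_sin, conj_trivial]
  field_simp

theorem zeroHomogeneous_neumannLog (h : Euc n → ℝ) : ZeroHomogeneous (neumannLog n θ h) :=
  (zeroHomogeneous_capLog h).sub (zeroHomogeneous_radialExt _ _)

theorem contDiffAt_neumannLog {k : WithTop ℕ∞} (hξ : ‖sphNormal n θ ξ‖ = 1)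
    (hh : ContDiffAt ℝ k h ξ) (h0 : h ξ ≠ 0) :
    ContDiffAt ℝ k (neumannLog n θ h) (sphNormal n θ ξ) :=
  (contDiffAt_capLog hξ hh h0).sub (contDiffAt_radialExt hξ (innerSL ℝ _).contDiff.contDiffAt)

theorem gradient_neumannLog (hξ : ‖sphNormal n θ ξ‖ = 1) (hh : ContDiffAt ℝ 1 h ξ)
    (h0 : h ξ ≠ 0) :
    ∇ (neumannLog n θ h) (sphNormal n θ ξ) =
      sgrad n θ (fun x => Real.log (h x)) ξ - tproj n θ ξ (neumannVec n θ) := by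
  rw [sgrad_log_eq_gradient_capLog hξ (hh.differentiableAt one_ne_zero) h0]
  exact gradient_sub_radialExt_innerSL hξ
    ((contDiffAt_capLog hξ hh h0).differentiableAt one_ne_zero)

theorem RobinBC.inner_gradient_neumannLog_conormal (hbc : RobinBC n θ h) (hθ : Real.sin θ ≠ 0)
    (hξ : ξ ∈ capBdry n θ) (hh : ContDiffAt ℝ 1 h ξ) (h0 : h ξ ≠ 0) :
    ⟪∇ (neumannLog n θ h) (sphNormal n θ ξ), conormal n θ ξ⟫ = 0 := by
  have htan : tproj n θ ξ (conormal n θ ξ) = conormal n θ ξ :=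
    tangentProj_of_inner_eq_zero (inner_sphNormal_conormal hθ hξ)
  have hrobin : ⟪sgrad n θ (fun x => Real.log (h x)) ξ, conormal n θ ξ⟫ = Real.cot θ := by
    refine mul_left_cancel₀ h0 ?_
    rw [mul_comm (h ξ) (Real.cot θ), ← hbc ξ hξ,
      sgrad_eq_smul_sgrad_log (hh.differentiableAt one_ne_zero) h0, inner_smul_left, conj_trivial]
  rw [gradient_neumannLog hξ.2 hh h0, inner_sub_left, hrobin, tproj_eq_tangentProj,
    inner_tangentProj_comm, ← tproj_eq_tangentProj, htan, inner_neumannVec_conormal hθ hξ, sub_self]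

end CapBoundary

section LogGradientEstimate

variable {n : ℕ} {θ : ℝ} {ξ : Euc n} {h w : Euc n → ℝ}

theorem isLocalMax_norm_mul_norm_gradient_of_isMaxOn_cap (hw : ZeroHomogeneous w)
    (hξ : ‖sphNormal n θ ξ‖ = 1) (hnear : ∀ᶠ y in 𝓝 (sphNormal n θ ξ),
      capCenter n θ + NormedSpace.normalize y ∈ cap n θ)
    (hmax : IsMaxOn (fun ζ => ‖∇ w (sphNormal n θ ζ)‖) (cap n θ) ξ) :
    IsLocalMax (fun y => ‖y‖ * ‖∇ w y‖) (sphNormal n θ ξ) := by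
  filter_upwards [hnear] with y hy
  have hle := hmax hy
  have hy0 : 0 < ‖y‖ := by
    rw [norm_pos_iff, ← NormedSpace.norm_normalize_eq_one_iff]
    simpa only [sphNormal_capCenter_add] using hy.2
  simp only [mem_ofPred_eq, sphNormal_capCenter_add] at hle
  rw [NormedSpace.normalize,
    hw.gradient_smul (inv_pos.2 hy0), inv_inv, norm_smul, norm_norm] at hle
  rwa [hξ, one_mul]

theorem eventually_capCenter_add_normalize_mem_cap (hξ : ξ ∈ cap n θ)
    (hpos : 0 < ξ (Fin.last n)) :
    ∀ᶠ y in 𝓝 (sphNormal n θ ξ), capCenter n θ + NormedSpace.normalize y ∈ cap n θ := by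
  have hcont : ContinuousAt (fun y => ⟪capCenter n θ + NormedSpace.normalize y, eVec n⟫)
      (sphNormal n θ ξ) :=
    (continuousAt_const.add (hasFDerivAt_normalize hξ.2).continuousAt).inner continuousAt_const
  have hneg : ⟪capCenter n θ + NormedSpace.normalize (sphNormal n θ ξ), eVec n⟫ < 0 := by
    rw [NormedSpace.normalize_eq_self_of_norm_eq_one hξ.2, capCenter_add_sphNormal, inner_eVec]
    exact neg_neg_of_pos hpos
  have hne : sphNormal n θ ξ ≠ 0 := norm_ne_zero_iff.1 (hξ.2 ▸ one_ne_zero)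
  filter_upwards [hcont.eventually_lt_const hneg, eventually_ne_nhds hne] with y hy hy0
  exact mem_cap_iff.2 ⟨hy.le, by
    rw [sphNormal_capCenter_add, NormedSpace.norm_normalize_eq_one_iff.2 hy0]⟩

theorem inner_sphNormal_neumannVec_nonpos (hθ : 0 ≤ Real.cos θ) (hξ : ξ ∈ cap n θ) :
    ⟪sphNormal n θ ξ, neumannVec n θ⟫ ≤ 0 := by
  have he : ⟪sphNormal n θ ξ, eVec n⟫ ≤ 0 := by
    rw [sphNormal, inner_sub_left, inner_smul_left, real_inner_self_eq_norm_sq, norm_eVec]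
    simpa using (mem_cap_iff.1 hξ).1.trans hθ
  rw [neumannVec, inner_smul_right]
  exact mul_nonpos_of_nonneg_of_nonpos (by positivity) he

theorem exists_norm_gradient_neumannLog_le_of_isMaxOn_cap {p q m : ℝ} (n : ℕ) (θ : ℝ)
    (hcos : 0 ≤ Real.cos θ) (hq : 1 < q) (hqp : q ≤ p) (hm : 0 < m) (K : ℝ) :
    ∃ C, ∀ f h : Euc n → ℝ, ContDiff ℝ 1 f → (∀ ζ ∈ cap n θ, m ≤ f ζ) →
      COneNormLe n θ f K → ContDiff ℝ 3 h → PosOnCap n θ h → IsConvexSol n θ h →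
      SolvesEq n θ p q f h → ∀ ξ ∈ cap n θ, 0 < ξ (Fin.last n) →
      IsMaxOn (fun ζ => ‖∇ (neumannLog n θ h) (sphNormal n θ ζ)‖) (cap n θ) ξ →
      ‖∇ (neumannLog n θ h) (sphNormal n θ ξ)‖ ≤ C := by
  have hfin : Module.finrank ℝ (Euc n) = n + 1 := by simp
  obtain ⟨C, hC⟩ := exists_forall_norm_gradient_le_of_isLocalMax hfin (neumannVec n θ)
    (capCenter n θ) hq hqp hm K
  refine ⟨C, fun f h hf hmf hfK hh hpos hconv hsol ξ hξ hlast hmax => ?_⟩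
  have hh2 : ContDiff ℝ 2 h := hh.of_le (by norm_num)
  have hnear := eventually_capCenter_add_normalize_mem_cap hξ hlast
  set F := radialExt (capCenter n θ) f
  have hF : ∀ ζ ∈ cap n θ, F (sphNormal n θ ζ) = f ζ := fun ζ hζ => radialExt_sphNormal f hζ.2
  refine hC (capLog n θ h) F (sphNormal n θ ξ) hξ.2
    (contDiffAt_capLog hξ.2 hh.contDiffAt (hpos ξ hξ).ne') (zeroHomogeneous_capLog h)
    (isLocalMax_norm_mul_norm_gradient_of_isMaxOn_cap (zeroHomogeneous_neumannLog h) hξ.2 hnear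
      hmax)
    (inner_sphNormal_neumannVec_nonpos hcos hξ)
    (fun Y hY => hconv.inner_logHess_capLog_pos hξ hh2.contDiffAt (hpos ξ hξ) hY)
    ?_ ?_ ?_ ?_ ?_
  · exact (contDiffAt_radialExt hξ.2 hf.contDiffAt).differentiableAt one_ne_zero
  · exact (hmf ξ hξ).trans_eq (hF ξ hξ).symm
  · exact (hF ξ hξ).trans_le ((le_abs_self _).trans (hfK.1 ξ hξ))
  · rw [← sgrad_eq_gradient_radialExt hξ.2 (hf.differentiable one_ne_zero ξ)]
    exact hfK.2 ξ hξ
  · filter_upwards [hnear] with y hy hy1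
    rw [NormedSpace.normalize_eq_self_of_norm_eq_one hy1] at hy
    have := hsol.det_logHess_capLog hy hh2.contDiffAt (hpos _ hy)
    rwa [sphNormal_capCenter_add, ← hF _ hy, sphNormal_capCenter_add] at this

theorem RobinBC.gradient_neumannLog_eq_zero_of_isMaxOn_cap (hbc : RobinBC n θ h)
    (hθ : θ ∈ Ioo 0 (π / 2)) (hh : ContDiff ℝ 2 h) (hpos : PosOnCap n θ h)
    (hξ : ξ ∈ capBdry n θ)
    (hmax : IsMaxOn (fun ζ => ‖∇ (neumannLog n θ h) (sphNormal n θ ζ)‖) (cap n θ) ξ) :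
    ∇ (neumannLog n θ h) (sphNormal n θ ξ) = 0 := by
  have hsin : 0 < Real.sin θ := Real.sin_pos_of_pos_of_lt_pi hθ.1 (by linarith [hθ.2, Real.pi_pos])
  have hcos : 0 < Real.cos θ := Real.cos_pos_of_mem_Ioo ⟨by linarith [hθ.1, Real.pi_pos], hθ.2⟩
  have hcot : 0 < Real.cot θ := by
    rw [Real.cot_eq_cos_div_sin]
    positivity
  have hne : ∀ ζ ∈ capBdry n θ, h ζ ≠ 0 := fun ζ hζ => (hpos ζ (capBdry_subset_cap hζ)).ne'
  exact gradient_eq_zero_of_isMaxOn_cap_of_neumann hsin hcot (zeroHomogeneous_neumannLog h)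
    (fun ζ hζ => hbc.inner_gradient_neumannLog_conormal hsin.ne' hζ
      (hh.of_le one_le_two).contDiffAt (hne ζ hζ))
    hξ (contDiffAt_neumannLog hξ.2 hh.contDiffAt (hne ξ hξ)) hmax

theorem exists_isMaxOn_norm_gradient_neumannLog (hh : ContDiff ℝ 2 h) (hpos : PosOnCap n θ h)
    (hne : (cap n θ).Nonempty) :
    ∃ ξ ∈ cap n θ, IsMaxOn (fun ζ => ‖∇ (neumannLog n θ h) (sphNormal n θ ζ)‖) (cap n θ) ξ := by
  refine isCompact_cap.exists_isMaxOn hne fun ζ hζ => ?_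
  have hcont : ContinuousAt (∇ (neumannLog n θ h)) (sphNormal n θ ζ) :=
    (hasFDerivAt_gradient (contDiffAt_neumannLog hζ.2 hh.contDiffAt (hpos ζ hζ).ne')).continuousAt
  exact (hcont.comp' continuous_sphNormal.continuousAt).norm.continuousWithinAt

theorem norm_sgrad_log_le (hξ : ‖sphNormal n θ ξ‖ = 1) (hh : ContDiffAt ℝ 1 h ξ) (h0 : h ξ ≠ 0) :
    ‖sgrad n θ (fun x => Real.log (h x)) ξ‖ ≤
      ‖∇ (neumannLog n θ h) (sphNormal n θ ξ)‖ + ‖neumannVec n θ‖ := by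
  rw [gradient_neumannLog hξ hh h0]
  exact (norm_le_norm_sub_add _ _).trans (by gcongr; exact norm_tangentProj_le hξ _)

theorem log_gradient_estimate_general {n : ℕ} {θ p q m : ℝ} (hθ : θ ∈ Set.Ioo 0 (π / 2))
    (hq : 1 < q) (hqp : q ≤ p) (hm : 0 < m) (K : ℝ) :
    ∃ C : ℝ, 0 < C ∧ ∀ f h : Euc n → ℝ, ContDiff ℝ 1 f → (∀ ξ ∈ cap n θ, m ≤ f ξ) →
      COneNormLe n θ f K → ContDiff ℝ 3 h → PosOnCap n θ h → IsConvexSol n θ h →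
      SolvesEq n θ p q f h → RobinBC n θ h →
      ∀ ξ ∈ cap n θ, ‖sgrad n θ (fun x => Real.log (h x)) ξ‖ ≤ C := by
  have hcos : 0 ≤ Real.cos θ := Real.cos_nonneg_of_mem_Icc
    ⟨by linarith [hθ.1, Real.pi_pos], hθ.2.le⟩
  obtain ⟨C₀, hC₀⟩ := exists_norm_gradient_neumannLog_le_of_isMaxOn_cap n θ hcos hq hqp hm K
  refine ⟨max C₀ 1 + ‖neumannVec n θ‖, by positivity, ?_⟩
  intro f h hf hmf hfK hh hpos hconv hsol hbc ξ hξ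
  have hh2 : ContDiff ℝ 2 h := hh.of_le (by norm_num)
  obtain ⟨ξ₀, hξ₀, hmax⟩ := exists_isMaxOn_norm_gradient_neumannLog hh2 hpos ⟨ξ, hξ⟩
  have hbound : ‖∇ (neumannLog n θ h) (sphNormal n θ ξ₀)‖ ≤ max C₀ 1 := by
    rcases hξ₀.1.eq_or_lt with hbdry | hinterior
    · rw [hbc.gradient_neumannLog_eq_zero_of_isMaxOn_cap hθ hh2 hpos ⟨hbdry.symm, hξ₀.2⟩ hmax,
        norm_zero]
      positivity
    · exact (hC₀ f h hf hmf hfK hh hpos hconv hsol ξ₀ hξ₀ hinterior hmax).trans (le_max_left _ _)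
  calc ‖sgrad n θ (fun x => Real.log (h x)) ξ‖
      ≤ ‖∇ (neumannLog n θ h) (sphNormal n θ ξ)‖ + ‖neumannVec n θ‖ :=
        norm_sgrad_log_le hξ.2 (hh2.of_le one_le_two).contDiffAt (hpos ξ hξ).ne'
    _ ≤ max C₀ 1 + ‖neumannVec n θ‖ := by
        gcongr
        exact (hmax hξ).trans hbound

end LogGradientEstimate

/-- Lemma 3.3, logarithmic gradient estimate: for `p ≥ q > 1` and
`θ ∈ (0, π/2)` there is a constant `C` depending only on `n`, `p`, `q`, a lower bound `m`
for `min_{C_θ} f` and a bound `K` for `‖f‖_{C¹(C_θ)}` (but not on the solution `h`), such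
that `max_{C_θ} |∇ log h| ≤ C`; moreover if `p = q = n+1` the constant is independent of
`p` and `q`. -/
theorem log_gradient_estimate
    (n : ℕ) (hn : 1 ≤ n) (θ p q : ℝ) (hθ : θ ∈ Set.Ioo 0 (π / 2))
    (hq1 : 1 < q) (hpq : q ≤ p) (m K : ℝ) (hm : 0 < m) :
    (∃ C : ℝ, 0 < C ∧
      ∀ f h : Euc n → ℝ, ContDiff ℝ (⊤ : ℕ∞) f → (∀ ξ ∈ cap n θ, m ≤ f ξ) →
        COneNormLe n θ f K →
        ContDiff ℝ (⊤ : ℕ∞) h → PosOnCap n θ h → IsConvexSol n θ h →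
        SolvesEq n θ p q f h → RobinBC n θ h →
        ∀ ξ ∈ cap n θ, ‖sgrad n θ (fun x => Real.log (h x)) ξ‖ ≤ C) ∧
    (∃ C : ℝ, 0 < C ∧
      ∀ p' q' : ℝ, p' = (n : ℝ) + 1 → q' = (n : ℝ) + 1 →
        ∀ f h : Euc n → ℝ, ContDiff ℝ (⊤ : ℕ∞) f → (∀ ξ ∈ cap n θ, m ≤ f ξ) →
          COneNormLe n θ f K →
          ContDiff ℝ (⊤ : ℕ∞) h → PosOnCap n θ h → IsConvexSol n θ h →
          SolvesEq n θ p' q' f h → RobinBC n θ h →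
          ∀ ξ ∈ cap n θ, ‖sgrad n θ (fun x => Real.log (h x)) ξ‖ ≤ C) := by
  have hC3 {h : Euc n → ℝ} (hh : ContDiff ℝ (⊤ : ℕ∞) h) : ContDiff ℝ 3 h :=
    hh.of_le (WithTop.coe_le_coe.2 le_top)
  have hn' : (1 : ℝ) < n + 1 := by
    rw [lt_add_iff_pos_left]
    exact_mod_cast hn
  obtain ⟨C, hC, hCpq⟩ := log_gradient_estimate_general (n := n) hθ hq1 hpq hm K
  obtain ⟨C', hC', hCn⟩ := log_gradient_estimate_general (n := n) hθ hn' le_rfl hm K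
  refine ⟨⟨C, hC, fun f h hf hmf hfK hh => ?_⟩, C', hC', ?_⟩
  · exact hCpq f h (hf.of_le (by simp)) hmf hfK (hC3 hh)
  · rintro _ _ rfl rfl f h hf hmf hfK hh
    exact hCn f h (hf.of_le (by simp)) hmf hfK (hC3 hh)
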